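/- Consider the detection problem: under the null distribution 𝒬, Ỹ ∈ ℝ^{N×n} has i.i.d. N(0, 1/N) entries; under the planted distribution 𝒫, first draw v ∼ BR(N,ρ) and a uniformly random orthogonal matrix Q ∈ ℝ^{n×n}, let Y have first column v and remaining columns i.i.d. N(0, (1/N) I_N), and observe Ỹ = YQ. Define M̃ := Σ_{i=1}^N (‖ỹ_i‖² − (n−1)/N) ỹ_i ỹ_iᵀ − (3/N) I_n, where ỹ_iᵀ are the rows of Ỹ. Fix a constant c₁ ∈ (0, 0.1). There exist constants C₂, c₃ > 0 depending only on c₁ such that for every δ ∈ (0,1/2): if ρ ≥ C₂·log(1/δ)/N, |ρ − 1/3| ≥ c₁, N ≥ log⁷(N/δ), and (nρ/√N + √(n/N))·log(N/δ) ≤ c₃, then ℙ_𝒫{‖M̃‖ < c₁/(4Nρ)} + ℙ_𝒬{‖M̃‖ > c₁/(8Nρ)} ≤ δ, where ‖M̃‖ is the spectral norm. -/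

import Mathlib

open MeasureTheory ProbabilityTheory Matrix

/-- Euclidean norm of a vector in `ℝ^k`. -/
noncomputable def eucNorm {k : ℕ} (v : Fin k → ℝ) : ℝ := Real.sqrt (∑ i, (v i) ^ 2)

/-- ℓ_p norm of a vector in `ℝ^k`. -/
noncomputable def lpNorm {k : ℕ} (p : ℝ) (v : Fin k → ℝ) : ℝ := (∑ i, |v i| ^ p) ^ (1 / p)

/-- Supremum (ℓ_∞) norm of a vector in `ℝ^k`. -/
noncomputable def supNorm {k : ℕ} (v : Fin k → ℝ) : ℝ := ⨆ i, |v i|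

/-- The Gaussian measure `N(0, σ2 · I_k)` on `ℝ^k`. -/
noncomputable def gaussVec (k : ℕ) (σ2 : NNReal) : Measure (Fin k → ℝ) :=
  Measure.pi fun _ => gaussianReal 0 σ2

instance (k : ℕ) (σ2 : NNReal) : IsProbabilityMeasure (gaussVec k σ2) := by
  unfold gaussVec; infer_instance

/-- The law of `N` i.i.d. samples from `N(0, σ2 · I_k)`. -/
noncomputable def iidGaussVec (N k : ℕ) (σ2 : NNReal) : Measure (Fin N → Fin k → ℝ) :=
  Measure.pi fun _ => gaussVec k σ2

/-- Concatenation `(a, bᵀ)ᵀ ∈ ℝ^n` of a scalar `a` with a vector `b ∈ ℝ^{n-1}`. -/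
noncomputable def rowCat {n : ℕ} (a : ℝ) (b : Fin (n - 1) → ℝ) : Fin n → ℝ :=
  fun j => if h : (j : ℕ) = 0 then a else b ⟨(j : ℕ) - 1, by have := j.isLt; omega⟩

/-- The `N × n` matrix whose rows are `y_iᵀ = (v_i, b_iᵀ)`, i.e. whose first column is `v`
and whose remaining `n - 1` columns are given by `B`. -/
noncomputable def gaussBasis {N n : ℕ} (v : Fin N → ℝ) (B : Fin N → Fin (n - 1) → ℝ) :
    Matrix (Fin N) (Fin n) ℝ :=
  Matrix.of fun i => rowCat (v i) (B i)

/-- The matrix `M(Y) = ∑_i (‖y_i‖² - (n-1)/N) y_i y_iᵀ - (3/N) I_n` built from the rows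
`y_iᵀ` of `Y`. -/
noncomputable def specMat {N n : ℕ} (Y : Matrix (Fin N) (Fin n) ℝ) :
    Matrix (Fin n) (Fin n) ℝ :=
  (∑ i, ((∑ j, (Y i j) ^ 2) - ((n : ℝ) - 1) / N) • Matrix.vecMulVec (Y i) (Y i))
    - ((3 : ℝ) / N) • (1 : Matrix (Fin n) (Fin n) ℝ)

/-- `u` is a unit leading eigenvector of the (symmetric) matrix `M`: a unit eigenvector
whose eigenvalue has the largest absolute value among all eigenvalues of `M`. -/
def IsLeadingEigen {n : ℕ} (M : Matrix (Fin n) (Fin n) ℝ) (u : Fin n → ℝ) : Prop :=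
  eucNorm u = 1 ∧ ∃ μ : ℝ, M.mulVec u = μ • u ∧
    ∀ μ' : ℝ, (∃ w : Fin n → ℝ, w ≠ 0 ∧ M.mulVec w = μ' • w) → |μ'| ≤ |μ|

/-- The quantity `η = η(N, n, v, δ)` with universal constant `C`. -/
noncomputable def etaBound (C : ℝ) (N n : ℕ) (v : Fin N → ℝ) (δ : ℝ) : ℝ :=
  C * ((eucNorm v + 1) * n * Real.sqrt (Real.log (N / δ)) / (N : ℝ) ^ ((3 : ℝ) / 2)
    + lpNorm 4 v ^ 2 * Real.sqrt (n * Real.log (N / δ)) / N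
    + lpNorm 6 v ^ 3 * (Real.sqrt n + Real.sqrt (Real.log (N / δ))) / Real.sqrt N
    + supNorm v ^ 2 * (n * Real.log (N / δ) + (Real.log (N / δ)) ^ 2) / N
    + (n * Real.log (N / δ)) ^ ((3 : ℝ) / 2) / (N : ℝ) ^ 2
    + |eucNorm v ^ 2 - 1| / N)

/-- The Bernoulli–Rademacher distribution on `ℝ`: `0` w.p. `1-ρ`, `±1/√(Nρ)` w.p. `ρ/2` each. -/
noncomputable def brMeasure (N : ℕ) (ρ : ℝ) : Measure ℝ :=
  (Real.toNNReal (1 - ρ)) • Measure.dirac 0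
    + (Real.toNNReal (ρ / 2)) • Measure.dirac (Real.sqrt (N * ρ))⁻¹
    + (Real.toNNReal (ρ / 2)) • Measure.dirac (-(Real.sqrt (N * ρ))⁻¹)

instance (N : ℕ) (ρ : ℝ) : IsFiniteMeasure (brMeasure N ρ) := by
  unfold brMeasure; infer_instance

/-- The law of a Bernoulli–Rademacher vector `v ∼ BR(N, ρ)` with i.i.d. entries. -/
noncomputable def brVec (N : ℕ) (ρ : ℝ) : Measure (Fin N → ℝ) :=
  Measure.pi fun _ => brMeasure N ρ

instance (N : ℕ) (ρ : ℝ) : IsFiniteMeasure (brVec N ρ) := by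
  unfold brVec; infer_instance

/-- Spectral (ℓ₂ operator) norm of a real matrix. -/
noncomputable def specNorm {m k : ℕ} (M : Matrix (Fin m) (Fin k) ℝ) : ℝ :=
  ‖LinearMap.toContinuousLinearMap (Matrix.toEuclideanLin M)‖

theorem exists_finset_half_net (E : Type*) [NormedAddCommGroup E] [NormedSpace ℝ E]
    [FiniteDimensional ℝ E] :
    ∃ T : Finset E, (∀ u ∈ T, ‖u‖ = 1) ∧ T.card ≤ 5 ^ Module.finrank ℝ E ∧
      ∀ x : E, ‖x‖ = 1 → ∃ u ∈ T, ‖x - u‖ < 1 / 2 := by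
  classical
  let P : Finset E → Prop := fun T =>
    (∀ u ∈ T, ‖u‖ = 1) ∧ ∀ c ∈ T, ∀ d ∈ T, c ≠ d → 1 / 2 ≤ ‖c - d‖
  have card_le : ∀ T, P T → T.card ≤ 5 ^ Module.finrank ℝ E := by
    rintro T ⟨h1, h2⟩
    have hinj : Function.Injective fun x : E => (2 : ℝ) • x := smul_right_injective E two_ne_zero
    rw [← Finset.card_image_of_injective T hinj]
    refine Besicovitch.card_le_of_separated _ ?_ ?_
    · intro c hc
      obtain ⟨x, hx, rfl⟩ := Finset.mem_image.1 hc
      simp [norm_smul, h1 x hx]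
    · intro c hc d hd hcd
      obtain ⟨x, hx, rfl⟩ := Finset.mem_image.1 hc
      obtain ⟨y, hy, rfl⟩ := Finset.mem_image.1 hd
      have := h2 x hx y hy (fun h => hcd (by rw [h]))
      simp only [← smul_sub, norm_smul, Real.norm_ofNat]
      linarith
  let Q : ℕ → Prop := fun k => ∃ T, P T ∧ T.card = k
  have hQ0 : Q 0 := ⟨∅, by simp [P], rfl⟩
  obtain ⟨T, hT, hTc⟩ := Nat.findGreatest_spec (P := Q) (Nat.zero_le (5 ^ Module.finrank ℝ E)) hQ0
  refine ⟨T, hT.1, card_le T hT, fun x hx => ?_⟩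
  by_contra! hcon
  have hxT : x ∉ T := fun h => by
    have := hcon x h
    norm_num at this
  have hP : P (insert x T) := by
    refine ⟨fun u hu => ?_, fun c hc d hd hcd => ?_⟩
    · rcases Finset.mem_insert.1 hu with rfl | hu
      exacts [hx, hT.1 u hu]
    · rcases Finset.mem_insert.1 hc with hc | hc <;> rcases Finset.mem_insert.1 hd with hd | hd
      · exact absurd (hc.trans hd.symm) hcd
      · rw [hc]; exact hcon d hd
      · rw [hd, norm_sub_rev]; exact hcon c hc
      · exact hT.2 c hc d hd hcd
  have := Nat.le_findGreatest (P := Q) (card_le _ hP) ⟨_, hP, rfl⟩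
  rw [Finset.card_insert_of_notMem hxT, hTc] at this
  omega

theorem LinearMap.IsSymmetric.exists_eigenvector_norm_le {E : Type*} [NormedAddCommGroup E]
    [InnerProductSpace ℝ E] [FiniteDimensional ℝ E] [Nontrivial E] {T : E →ₗ[ℝ] E}
    (hT : T.IsSymmetric) :
    ∃ (x : E) (μ : ℝ), ‖x‖ = 1 ∧ T x = μ • x ∧ ∀ y, ‖T y‖ ≤ |μ| * ‖y‖ := by
  have hpos : 0 < Module.finrank ℝ E := Module.finrank_pos
  have : Nonempty (Fin (Module.finrank ℝ E)) := ⟨⟨0, hpos⟩⟩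
  obtain ⟨i, hi⟩ := Finite.exists_max fun i => |hT.eigenvalues rfl i|
  refine ⟨hT.eigenvectorBasis rfl i, hT.eigenvalues rfl i, by simp,
    hT.apply_eigenvectorBasis rfl i, fun y => ?_⟩
  refine le_of_sq_le_sq ?_ (by positivity)
  have h1 : ∀ z : E, ‖z‖ ^ 2 = ∑ j, ((hT.eigenvectorBasis rfl).repr z j) ^ 2 := fun z => by
    rw [← (hT.eigenvectorBasis rfl).repr.norm_map z, EuclideanSpace.norm_sq_eq]
    simp
  rw [mul_pow, h1, h1, Finset.mul_sum]
  refine Finset.sum_le_sum fun j _ => ?_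
  rw [hT.eigenvectorBasis_apply_self_apply rfl y j, mul_pow]
  refine mul_le_mul_of_nonneg_right ?_ (sq_nonneg _)
  simpa using pow_le_pow_left₀ (abs_nonneg _) (hi j) 2

theorem LinearMap.IsSymmetric.abs_le_two_mul_abs_inner {E : Type*} [NormedAddCommGroup E]
    [InnerProductSpace ℝ E] {T : E →ₗ[ℝ] E} (hT : T.IsSymmetric) {x u : E} {μ : ℝ}
    (hx : ‖x‖ = 1) (hTx : T x = μ • x) (hμ : ∀ y, ‖T y‖ ≤ |μ| * ‖y‖)
    (hu : ‖u‖ = 1) (hxu : ‖x - u‖ < 1 / 2) : |μ| ≤ 2 * |inner ℝ u (T u)| := by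
  set c := inner ℝ x u with hc
  have hc78 : 7 / 8 ≤ c := by
    have h := norm_sub_sq_real x u
    rw [hx, hu] at h
    nlinarith [norm_nonneg (x - u)]
  set r := u - c • x with hr
  have hxx : inner ℝ x x = 1 := by rw [real_inner_self_eq_norm_sq, hx]; norm_num
  have hxr : inner ℝ x r = 0 := by
    rw [hr, inner_sub_right, inner_smul_right, hxx]; simp [hc]
  have hur : u = c • x + r := by rw [hr]; abel
  have hrr : ‖r‖ ^ 2 = 1 - c ^ 2 := by
    have h : ‖u‖ ^ 2 = c ^ 2 + ‖r‖ ^ 2 := by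
      rw [← real_inner_self_eq_norm_sq, ← real_inner_self_eq_norm_sq, hur]
      simp only [inner_add_left, inner_add_right, inner_smul_left, inner_smul_right, hxx, hxr,
        real_inner_comm x r]
      simp; ring
    rw [hu] at h; linarith
  have hxTr : inner ℝ x (T r) = 0 := by rw [← hT x r, hTx, inner_smul_left, hxr]; simp
  have hval : inner ℝ u (T u) = c ^ 2 * μ + inner ℝ r (T r) := by
    rw [hur, map_add, map_smul, hTx]
    have : inner ℝ r x = 0 := by rw [real_inner_comm, hxr]
    simp only [inner_add_left, inner_add_right, inner_smul_left, inner_smul_right, hxx, this, hxTr]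
    simp; ring
  have hrTr : |inner ℝ r (T r)| ≤ |μ| * (1 - c ^ 2) := by
    calc _ ≤ ‖r‖ * ‖T r‖ := abs_real_inner_le_norm _ _
      _ ≤ ‖r‖ * (|μ| * ‖r‖) := by gcongr; exact hμ r
      _ = |μ| * ‖r‖ ^ 2 := by ring
      _ = _ := by rw [hrr]
  have h3 : c ^ 2 * |μ| ≤ |inner ℝ u (T u)| + |inner ℝ r (T r)| := by
    have : c ^ 2 * μ = inner ℝ u (T u) - inner ℝ r (T r) := by rw [hval]; ring
    rw [← abs_of_nonneg (sq_nonneg c), ← abs_mul, this]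
    exact abs_sub _ _
  nlinarith [abs_nonneg μ, mul_le_mul hc78 hc78 (by norm_num) (by linarith)]

/-- The spectral norm of a symmetric matrix is at most twice the largest value of its
quadratic form over a suitable net of `5 ^ n` unit vectors. -/
theorem exists_finset_specNorm_le (n : ℕ) (hn : 1 ≤ n) :
    ∃ T : Finset (Fin n → ℝ), (∀ u ∈ T, ∑ i, u i ^ 2 = 1) ∧ T.card ≤ 5 ^ n ∧
      ∀ M : Matrix (Fin n) (Fin n) ℝ, Mᵀ = M → ∃ u ∈ T, specNorm M ≤ 2 * |u ⬝ᵥ M *ᵥ u| := by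
  classical
  obtain ⟨T, h1, hc, hnet⟩ := exists_finset_half_net (EuclideanSpace ℝ (Fin n))
  have : Nonempty (Fin n) := ⟨⟨0, hn⟩⟩
  refine ⟨T.image WithLp.ofLp, ?_, ?_, fun M hM => ?_⟩
  · intro u hu
    obtain ⟨x, hx, rfl⟩ := Finset.mem_image.1 hu
    have := h1 x hx
    have h2 := EuclideanSpace.norm_sq_eq x
    rw [this] at h2
    simpa using h2.symm
  · refine Finset.card_image_le.trans (hc.trans_eq (by simp))
  · have hsym : (Matrix.toEuclideanLin M).IsSymmetric := by
      rw [Matrix.isSymmetric_toEuclideanLin_iff, Matrix.IsHermitian,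
        Matrix.conjTranspose_eq_transpose_of_trivial, hM]
    obtain ⟨x, μ, hx, hTx, hμ⟩ := hsym.exists_eigenvector_norm_le
    obtain ⟨u, hu, hxu⟩ := hnet x hx
    refine ⟨u.ofLp, Finset.mem_image_of_mem _ hu, ?_⟩
    have h2 := hsym.abs_le_two_mul_abs_inner hx hTx hμ (h1 u hu) hxu
    refine (ContinuousLinearMap.opNorm_le_bound _ (abs_nonneg μ) hμ).trans (h2.trans_eq ?_)
    congr 2
    rw [EuclideanSpace.inner_eq_star_dotProduct]
    simp [Matrix.toLpLin_apply, dotProduct_comm]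

theorem abs_dotProduct_mulVec_le_specNorm {n : ℕ} (M : Matrix (Fin n) (Fin n) ℝ) {u : Fin n → ℝ}
    (hu : ∑ i, u i ^ 2 = 1) : |u ⬝ᵥ M *ᵥ u| ≤ specNorm M := by
  set x : EuclideanSpace ℝ (Fin n) := WithLp.toLp 2 u
  have hx : ‖x‖ = 1 := by rw [EuclideanSpace.norm_eq]; simp [x, hu]
  have : u ⬝ᵥ M *ᵥ u = inner ℝ x (Matrix.toEuclideanLin M x) := by
    rw [EuclideanSpace.inner_eq_star_dotProduct]
    simp [x, Matrix.toLpLin_apply, dotProduct_comm]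
  rw [this]
  refine (abs_real_inner_le_norm _ _).trans ?_
  rw [hx, one_mul]
  have := (LinearMap.toContinuousLinearMap (Matrix.toEuclideanLin M)).le_opNorm x
  rwa [hx, mul_one] at this

theorem specMat_transpose {N n : ℕ} (Y : Matrix (Fin N) (Fin n) ℝ) : (specMat Y)ᵀ = specMat Y := by
  ext i j
  simp only [specMat, Matrix.transpose_apply, Matrix.sub_apply, Matrix.sum_apply, Matrix.smul_apply,
    Matrix.vecMulVec_apply, smul_eq_mul, Matrix.one_apply, eq_comm (a := j), mul_comm (Y _ j)]

theorem dotProduct_specMat_mulVec {N n : ℕ} (Y : Matrix (Fin N) (Fin n) ℝ) (u : Fin n → ℝ) :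
    u ⬝ᵥ specMat Y *ᵥ u =
      (∑ i, ((∑ j, Y i j ^ 2) - ((n : ℝ) - 1) / N) * (∑ j, u j * Y i j) ^ 2)
        - 3 / N * ∑ j, u j ^ 2 := by
  simp only [specMat, Matrix.sub_mulVec, Matrix.sum_mulVec, Matrix.smul_mulVec, Matrix.one_mulVec,
    dotProduct_sub, dotProduct_sum, dotProduct_smul, Matrix.vecMulVec_mulVec, smul_eq_mul]
  congr 1
  · refine Finset.sum_congr rfl fun i _ => ?_
    congr 1
    have : Y i ⬝ᵥ u = ∑ j, u j * Y i j := dotProduct_comm _ _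
    rw [this, MulOpposite.smul_eq_mul_unop, MulOpposite.unop_op, sq]
    rfl
  · simp [dotProduct, sq]

/-- Rotating the rows by `Q` does not change the quadratic form in the direction of the first
column. -/
theorem abs_quadForm_le_specNorm_mul {N n : ℕ} (Y : Matrix (Fin N) (Fin n) ℝ)
    {Q : Matrix (Fin n) (Fin n) ℝ} (hQ : Qᵀ * Q = 1) (k : Fin n) :
    |(∑ i, ((∑ j, Y i j ^ 2) - ((n : ℝ) - 1) / N) * Y i k ^ 2) - 3 / (N : ℝ)| ≤
      specNorm (specMat (Y * Q)) := by
  have hQ' : Q * Qᵀ = 1 := mul_eq_one_comm.1 hQ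
  have hu : ∑ j, Q k j ^ 2 = 1 := by
    have := congrFun (congrFun hQ' k) k
    simpa [Matrix.mul_apply, sq] using this
  refine le_of_eq_of_le ?_ (abs_dotProduct_mulVec_le_specNorm _ hu)
  rw [dotProduct_specMat_mulVec, hu, mul_one]
  have hYQ : Y * Q * Qᵀ = Y := by rw [Matrix.mul_assoc, hQ', Matrix.mul_one]
  congr 2
  refine Finset.sum_congr rfl fun i _ => ?_
  congr 2
  · have h : (Y * Q) * (Y * Q)ᵀ = Y * Yᵀ := by
      rw [Matrix.transpose_mul, ← Matrix.mul_assoc, hYQ]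
    have := congrFun (congrFun h i) i
    rw [Matrix.mul_apply, Matrix.mul_apply] at this
    simp only [Matrix.transpose_apply, ← sq] at this
    exact this.symm
  · have := congrFun (congrFun hYQ i) k
    rw [Matrix.mul_apply] at this
    simp only [Matrix.transpose_apply] at this
    rw [← this]
    exact Finset.sum_congr rfl fun j _ => mul_comm _ _

theorem continuous_specNorm_specMat {N n : ℕ} :
    Continuous fun Y : Fin N → Fin n → ℝ => specNorm (specMat (Matrix.of Y)) := by
  have h1 : Continuous fun M : Matrix (Fin n) (Fin n) ℝ => specNorm M := by
    have : Continuous fun M : Matrix (Fin n) (Fin n) ℝ =>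
        LinearMap.toContinuousLinearMap (Matrix.toEuclideanLin M) :=
      (LinearMap.toContinuousLinearMap.toLinearMap ∘ₗ
        (Matrix.toEuclideanLin (𝕜 := ℝ) (m := Fin n)
          (n := Fin n)).toLinearMap).continuous_of_finiteDimensional
    exact this.norm
  refine h1.comp ?_
  unfold specMat
  refine Continuous.sub (continuous_finsetSum _ fun i _ => ?_) continuous_const
  have h2 : Continuous fun Y : Fin N → Fin n → ℝ =>
      (∑ j, Matrix.of Y i j ^ 2) - ((n : ℝ) - 1) / N := by
    simp only [Matrix.of_apply]; fun_prop
  refine h2.smul ?_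
  refine continuous_matrix fun a b => ?_
  simp only [Matrix.vecMulVec_apply]
  fun_prop

theorem integrable_exp_mul_sq_gaussianReal {a : ℝ} (ha : a < 1 / 2) :
    Integrable (fun x => Real.exp (a * x ^ 2)) (gaussianReal 0 1) := by
  rw [gaussianReal_of_var_ne_zero 0 one_ne_zero,
    integrable_withDensity_iff_integrable_smul' (measurable_gaussianPDF 0 1)
      (by simp [gaussianPDF])]
  refine ((integrable_exp_neg_mul_sq (b := 1 / 2 - a) (by linarith)).const_mul
    (√(2 * Real.pi))⁻¹).congr (ae_of_all _ fun x => ?_)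
  simp only [toReal_gaussianPDF, gaussianPDFReal, smul_eq_mul, NNReal.coe_one, mul_one, sub_zero]
  rw [mul_assoc, ← Real.exp_add]
  ring_nf

theorem integral_exp_mul_sq_gaussianReal {a : ℝ} (ha : a < 1 / 2) :
    ∫ x, Real.exp (a * x ^ 2) ∂(gaussianReal 0 1) = (√(1 - 2 * a))⁻¹ := by
  rw [integral_gaussianReal_eq_integral_smul one_ne_zero]
  have h : ∀ x : ℝ, gaussianPDFReal 0 1 x • Real.exp (a * x ^ 2) =
      (√(2 * Real.pi))⁻¹ * Real.exp (-(1 / 2 - a) * x ^ 2) := fun x => by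
    simp only [gaussianPDFReal, smul_eq_mul, NNReal.coe_one, mul_one, sub_zero]
    rw [mul_assoc, ← Real.exp_add]
    ring_nf
  simp_rw [h]
  rw [integral_const_mul, integral_gaussian, ← Real.sqrt_inv, ← Real.sqrt_mul (by positivity),
    ← Real.sqrt_inv]
  congr 1
  have : 1 - 2 * a ≠ 0 := by linarith
  have : (1 / 2 - a) ≠ 0 := by linarith
  have := Real.pi_ne_zero
  field_simp

theorem one_le_one_sub_mul_exp {y : ℝ} (hy : |y| ≤ 1 / 2) :
    1 ≤ (1 - y) * Real.exp (y + y ^ 2) := by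
  obtain ⟨h1, h2⟩ := abs_le.1 hy
  rcases le_or_gt 0 y with h | h
  · have := Real.quadratic_le_exp_of_nonneg (x := y + y ^ 2) (by positivity)
    refine le_trans ?_ (mul_le_mul_of_nonneg_left this (by linarith))
    have h3 : 0 ≤ y ^ 2 * ((1 - y) * (1 + y) ^ 2 / 2 - y) := by
      refine mul_nonneg (sq_nonneg _) ?_
      nlinarith [mul_nonneg h (sub_nonneg.2 h2), mul_nonneg h (mul_nonneg h (sub_nonneg.2 h2))]
    nlinarith
  · have := Real.add_one_le_exp (y + y ^ 2)
    refine le_trans ?_ (mul_le_mul_of_nonneg_left this (by linarith))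
    nlinarith [mul_nonneg (sq_nonneg y) (neg_nonneg.2 h.le)]

theorem exp_neg_mul_inv_sqrt_le {θ : ℝ} (hθ : |θ| ≤ 1 / 4) :
    Real.exp (-θ) * (√(1 - 2 * θ))⁻¹ ≤ Real.exp (2 * θ ^ 2) := by
  have h4 := abs_le.1 hθ
  have h := one_le_one_sub_mul_exp (y := 2 * θ) (by rw [abs_mul]; norm_num; linarith)
  have hpos : 0 < √(1 - 2 * θ) := Real.sqrt_pos.2 (by linarith)
  rw [← div_eq_mul_inv, div_le_iff₀ hpos, Real.exp_neg]
  refine le_of_sq_le_sq ?_ (by positivity)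
  rw [mul_pow, Real.sq_sqrt (by linarith), inv_pow, inv_le_iff_one_le_mul₀ (by positivity)]
  refine h.trans_eq ?_
  rw [← Real.exp_nat_mul, ← Real.exp_nat_mul, mul_right_comm, ← Real.exp_add, mul_comm]
  congr 2
  push_cast; ring

theorem integral_pow_four_gaussianReal : ∫ x, x ^ 4 ∂(gaussianReal 0 1) = 3 := by
  have h := iteratedDeriv_mgf_zero (X := fun x : ℝ => x) (μ := gaussianReal 0 1)
    (by rw [integrableExpSet_fun_id_gaussianReal]; simp) 4
  rw [mgf_fun_id_gaussianReal] at h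
  simp only [zero_mul, NNReal.coe_one, one_mul, zero_add] at h
  have hd : ∀ (p p' : ℝ → ℝ), (∀ t, HasDerivAt p (p' t) t) →
      deriv (fun t => p t * Real.exp (t ^ 2 / 2)) =
        fun t => (p' t + t * p t) * Real.exp (t ^ 2 / 2) := by
    intro p p' hp
    ext t
    have he : HasDerivAt (fun t : ℝ => Real.exp (t ^ 2 / 2)) (Real.exp (t ^ 2 / 2) * t) t := by
      have h2 : HasDerivAt (fun t : ℝ => t ^ 2 / 2) t t := by
        simpa using (hasDerivAt_pow 2 t).div_const 2
      exact h2.exp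
    refine (((hp t).mul he).congr_deriv ?_).deriv
    ring
  have h0 : (fun t : ℝ => Real.exp (t ^ 2 / 2)) = fun t => 1 * Real.exp (t ^ 2 / 2) := by simp
  simp only [iteratedDeriv_succ, iteratedDeriv_zero] at h
  rw [h0, hd (fun _ => 1) (fun _ => 0) (fun t => hasDerivAt_const _ _),
    hd (fun t => 0 + t * 1) (fun _ => 1) (fun t => by simpa using hasDerivAt_id' t),
    hd (fun t => 1 + t * (0 + t * 1)) (fun t => 2 * t)
      (fun t => by simpa [← sq] using (hasDerivAt_pow 2 t).const_add 1),
    hd (fun t => 2 * t + t * (1 + t * (0 + t * 1))) (fun t => 3 + 3 * t ^ 2)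
      (fun t => by
        have := (((hasDerivAt_id' t).const_mul 3).add (hasDerivAt_pow 3 t)).congr_of_eventuallyEq
          (f₁ := fun t => 2 * t + t * (1 + t * (0 + t * 1)))
          (Filter.Eventually.of_forall fun s => by simp only [Pi.add_apply]; ring)
        refine this.congr_deriv ?_
        push_cast; ring)] at h
  simpa using h.symm

theorem integral_sq_gaussianReal : ∫ x, x ^ 2 ∂(gaussianReal 0 1) = 1 := by
  have h := variance_fun_id_gaussianReal (μ := 0) (v := 1)
  rw [variance_eq_integral (by fun_prop), integral_id_gaussianReal] at h
  simpa using h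

theorem integrable_pow_gaussianReal (k : ℕ) : Integrable (fun x => x ^ k) (gaussianReal 0 1) :=
  integrable_pow_of_mem_interior_integrableExpSet (X := fun x : ℝ => x)
    (by rw [integrableExpSet_fun_id_gaussianReal]; simp) k

/-- A Chernoff bound for product measures. -/
theorem pi_measure_le_exp {ι : Type*} [Fintype ι] {E : ι → Type*} [∀ i, MeasurableSpace (E i)]
    (μ : ∀ i, Measure (E i)) [∀ i, IsProbabilityMeasure (μ i)] (f : ∀ i, E i → ℝ)
    (hf0 : ∀ i x, 0 ≤ f i x) (hfi : ∀ i, Integrable (f i) (μ i)) {c t : ℝ}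
    (hfc : ∀ i, ∫ x, f i x ∂(μ i) ≤ Real.exp c) {S : Set (∀ i, E i)}
    (hS : ∀ x ∈ S, Real.exp t ≤ ∏ i, f i (x i)) :
    Measure.pi μ S ≤ ENNReal.ofReal (Real.exp (Fintype.card ι * c - t)) := by
  have h1 := mul_meas_ge_le_integral_of_nonneg (μ := Measure.pi μ)
    (f := fun x : ∀ i, E i => ∏ i, f i (x i))
    (ae_of_all _ fun x => Finset.prod_nonneg fun i _ => hf0 i _)
    (Integrable.fintype_prod_dep hfi) (Real.exp t)
  rw [integral_fintype_prod_eq_prod] at h1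
  have h2 : ∏ i, ∫ x, f i x ∂(μ i) ≤ Real.exp (Fintype.card ι * c) := by
    refine (Finset.prod_le_prod (fun i _ => integral_nonneg (hf0 i)) fun i _ => hfc i).trans_eq ?_
    rw [Finset.prod_const, ← Real.exp_nat_mul, Finset.card_univ]
  have hS' : S ⊆ {x | Real.exp t ≤ ∏ i, f i (x i)} := hS
  refine (measure_mono hS').trans ?_
  rw [← ENNReal.ofReal_toReal (measure_ne_top (Measure.pi μ) _)]
  refine ENNReal.ofReal_le_ofReal ?_
  rw [Real.exp_sub, le_div_iff₀ (Real.exp_pos _), mul_comm]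
  exact h1.trans h2

theorem integrable_exp_sum_mul_sq_gaussVec {n : ℕ} {a : Fin n → ℝ} (ha : ∀ j, a j < 1 / 2) :
    Integrable (fun x => Real.exp (∑ j, a j * x j ^ 2)) (gaussVec n 1) := by
  simp_rw [Real.exp_sum]
  exact Integrable.fintype_prod_dep (f := fun j y => Real.exp (a j * y ^ 2))
    fun j => integrable_exp_mul_sq_gaussianReal (ha j)

theorem integral_exp_sum_mul_sq_gaussVec {n : ℕ} {a : Fin n → ℝ} (ha : ∀ j, a j < 1 / 2) :
    ∫ x, Real.exp (∑ j, a j * x j ^ 2) ∂(gaussVec n 1) = ∏ j, (√(1 - 2 * a j))⁻¹ := by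
  simp_rw [Real.exp_sum]
  rw [gaussVec, integral_fintype_prod_eq_prod (f := fun j y => Real.exp (a j * y ^ 2))]
  exact Finset.prod_congr rfl fun j _ => integral_exp_mul_sq_gaussianReal (ha j)

/-- Moment generating function of a centered chi-squared variable. -/
theorem integral_exp_chiSq_le {n : ℕ} {θ : ℝ} (hθ : |θ| ≤ 1 / 4) :
    ∫ x, Real.exp (θ * ((∑ j, x j ^ 2) - n)) ∂(gaussVec n 1) ≤ Real.exp (2 * θ ^ 2 * n) := by
  have h : ∀ x : Fin n → ℝ, Real.exp (θ * ((∑ j, x j ^ 2) - n)) =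
      Real.exp (-θ) ^ n * Real.exp (∑ j, θ * x j ^ 2) := fun x => by
    rw [← Real.exp_nat_mul, ← Real.exp_add, ← Finset.mul_sum]
    ring_nf
  have h4 := abs_le.1 hθ
  simp_rw [h]
  rw [integral_const_mul, integral_exp_sum_mul_sq_gaussVec (fun _ => by linarith),
    Finset.prod_const, Finset.card_univ, Fintype.card_fin, ← mul_pow, mul_comm _ (n : ℝ),
    Real.exp_nat_mul]
  exact pow_le_pow_left₀ (by positivity) (exp_neg_mul_inv_sqrt_le hθ) n

theorem integrable_exp_chiSq {n : ℕ} {θ : ℝ} (hθ : |θ| ≤ 1 / 4) :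
    Integrable (fun x => Real.exp (θ * ((∑ j, x j ^ 2) - n))) (gaussVec n 1) := by
  have h4 := abs_le.1 hθ
  have h : ∀ x : Fin n → ℝ, Real.exp (θ * ((∑ j, x j ^ 2) - n)) =
      Real.exp (-θ * n) * Real.exp (∑ j, θ * x j ^ 2) := fun x => by
    rw [← Real.exp_add, ← Finset.mul_sum]
    ring_nf
  simp_rw [h]
  exact (integrable_exp_sum_mul_sq_gaussVec fun _ => by linarith).const_mul _

/-- Rotation invariance of the standard Gaussian. -/
theorem map_gaussVec_normSq_dotProduct {n : ℕ} {u : Fin n → ℝ} (hu : ∑ j, u j ^ 2 = 1)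
    (k : Fin n) :
    (gaussVec n 1).map (fun x => (∑ j, x j ^ 2, ∑ j, u j * x j)) =
      (gaussVec n 1).map (fun x => (∑ j, x j ^ 2, x k)) := by
  set v : EuclideanSpace ℝ (Fin n) := WithLp.toLp 2 u with hv
  have hvn : ‖v‖ = 1 := by rw [EuclideanSpace.norm_eq]; simp [v, hu]
  obtain ⟨b, hb⟩ := Orthonormal.exists_orthonormalBasis_extension_of_card_eq
    (𝕜 := ℝ) (E := EuclideanSpace ℝ (Fin n)) (ι := Fin n) (by simp) (v := fun _ => v) (s := {k})
    (by
      constructor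
      · intro i; simpa using hvn
      · intro i j hij; exact absurd (Subsingleton.elim i j) hij)
  have hbk : b k = v := hb k rfl
  have h1 : (gaussVec n 1).map (WithLp.toLp 2) = stdGaussian (EuclideanSpace ℝ (Fin n)) :=
    map_pi_eq_stdGaussian
  have h2 := stdGaussian_eq_map_pi_orthonormalBasis b
  have hG : Measurable fun z : EuclideanSpace ℝ (Fin n) => (‖z‖ ^ 2, inner ℝ v z) := by fun_prop
  have h3 := congrArg (Measure.map fun z => (‖z‖ ^ 2, inner ℝ v z)) (h1.trans h2)
  rw [Measure.map_map hG (by fun_prop), Measure.map_map hG (by fun_prop)] at h3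
  convert h3 using 2
  · ext x
    · simp [EuclideanSpace.norm_sq_eq]
    · simp [v, PiLp.inner_apply, mul_comm]
  · ext x
    · simp only [Function.comp]
      rw [← b.repr.norm_map, EuclideanSpace.norm_sq_eq]
      refine Finset.sum_congr rfl fun j _ => ?_
      simp [map_sum, Finset.sum_apply, Pi.single_apply]
    · simp only [Function.comp]
      rw [← hbk, inner_sum]
      simp [inner_smul_right, orthonormal_iff_ite.1 b.orthonormal]
  · rfl

theorem integrable_and_integral_of_coord {n : ℕ} {u : Fin n → ℝ} (hu : ∑ j, u j ^ 2 = 1)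
    (k : Fin n) {F : ℝ → ℝ → ℝ} (hF : Measurable fun p : ℝ × ℝ => F p.1 p.2)
    (hi : Integrable (fun x : Fin n → ℝ => F (∑ j, x j ^ 2) (x k)) (gaussVec n 1)) :
    Integrable (fun x : Fin n → ℝ => F (∑ j, x j ^ 2) (∑ j, u j * x j)) (gaussVec n 1) ∧
      ∫ x, F (∑ j, x j ^ 2) (∑ j, u j * x j) ∂(gaussVec n 1) =
        ∫ x, F (∑ j, x j ^ 2) (x k) ∂(gaussVec n 1) := by
  have h := map_gaussVec_normSq_dotProduct hu k
  have m1 : AEMeasurable (fun x : Fin n → ℝ => (∑ j, x j ^ 2, ∑ j, u j * x j)) (gaussVec n 1) := by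
    fun_prop
  have m2 : AEMeasurable (fun x : Fin n → ℝ => (∑ j, x j ^ 2, x k)) (gaussVec n 1) := by
    fun_prop
  constructor
  · have := (integrable_map_measure (μ := gaussVec n 1) hF.aestronglyMeasurable m2).2 hi
    rw [← h] at this
    exact (integrable_map_measure hF.aestronglyMeasurable m1).1 this
  · rw [← integral_map (f := fun p : ℝ × ℝ => F p.1 p.2) m1 hF.aestronglyMeasurable, h,
      integral_map m2 hF.aestronglyMeasurable]

theorem integral_chiSq_mul_coord_sq {n : ℕ} (k : Fin n) :
    Integrable (fun x : Fin n → ℝ => ((∑ j, x j ^ 2) - ((n : ℝ) - 1)) * x k ^ 2) (gaussVec n 1) ∧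
      ∫ x, ((∑ j, x j ^ 2) - ((n : ℝ) - 1)) * x k ^ 2 ∂(gaussVec n 1) = 3 := by
  have hmp : ∀ j : Fin n, MeasurePreserving (Function.eval j) (gaussVec n 1) (gaussianReal 0 1) :=
    fun j => measurePreserving_eval (fun _ : Fin n => gaussianReal 0 1) j
  have hcoord : ∀ f : ℝ → ℝ, Integrable f (gaussianReal 0 1) →
      Integrable (fun x : Fin n → ℝ => f (x k)) (gaussVec n 1) ∧
      ∫ x, f (x k) ∂(gaussVec n 1) = ∫ y, f y ∂(gaussianReal 0 1) := fun f hf => by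
    refine ⟨(hmp k).integrable_comp_of_integrable hf, ?_⟩
    rw [← (hmp k).map_eq, integral_map (hmp k).measurable.aemeasurable
      (by rw [(hmp k).map_eq]; exact hf.aestronglyMeasurable)]
  have hsq := hcoord (fun y => y ^ 2) (integrable_pow_gaussianReal 2)
  rw [integral_sq_gaussianReal] at hsq
  have hterm : ∀ j : Fin n,
      Integrable (fun x : Fin n → ℝ => (x j ^ 2 - 1) * x k ^ 2) (gaussVec n 1) ∧
      ∫ x, (x j ^ 2 - 1) * x k ^ 2 ∂(gaussVec n 1) = if j = k then 2 else 0 := fun j => by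
    split_ifs with hjk
    · subst hjk
      have h := hcoord (fun y => y ^ 4 - y ^ 2)
        ((integrable_pow_gaussianReal 4).sub (integrable_pow_gaussianReal 2))
      rw [integral_sub (integrable_pow_gaussianReal 4) (integrable_pow_gaussianReal 2),
        integral_sq_gaussianReal, integral_pow_four_gaussianReal] at h
      have he : (fun x : Fin n → ℝ => (x j ^ 2 - 1) * x j ^ 2) = fun x => x j ^ 4 - x j ^ 2 := by
        ext x; ring
      rw [he]
      exact ⟨h.1, h.2.trans (by norm_num)⟩
    · let f : Fin n → ℝ → ℝ := fun i y => if i = j then y ^ 2 - 1 else if i = k then y ^ 2 else 1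
      have he : (fun x : Fin n → ℝ => (x j ^ 2 - 1) * x k ^ 2) = fun x => ∏ i, f i (x i) := by
        ext x
        rw [← Finset.mul_prod_erase _ _ (Finset.mem_univ j), ← Finset.mul_prod_erase _ _
          (Finset.mem_erase.2 ⟨Ne.symm hjk, Finset.mem_univ k⟩), Finset.prod_eq_one]
        · simp [f, Ne.symm hjk]
        · intro i hi
          simp only [Finset.mem_erase] at hi
          simp [f, hi.1, hi.2.1]
      have hfi : ∀ i, Integrable (f i) (gaussianReal 0 1) := fun i => by
        simp only [f]
        split_ifs
        exacts [(integrable_pow_gaussianReal 2).sub (integrable_const _),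
          integrable_pow_gaussianReal 2, integrable_const _]
      rw [he]
      refine ⟨Integrable.fintype_prod_dep hfi, ?_⟩
      rw [gaussVec, integral_fintype_prod_eq_prod]
      refine Finset.prod_eq_zero (Finset.mem_univ j) ?_
      simp only [f, if_true]
      rw [integral_sub (integrable_pow_gaussianReal 2) (integrable_const _),
        integral_sq_gaussianReal]
      simp
  have he : (fun x : Fin n → ℝ => ((∑ j, x j ^ 2) - ((n : ℝ) - 1)) * x k ^ 2) =
      fun x => x k ^ 2 + ∑ j, (x j ^ 2 - 1) * x k ^ 2 := by
    ext x
    rw [← Finset.sum_mul, Finset.sum_sub_distrib]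
    simp; ring
  have hs : Integrable (fun x : Fin n → ℝ => ∑ j, (x j ^ 2 - 1) * x k ^ 2) (gaussVec n 1) :=
    integrable_finsetSum _ fun j _ => (hterm j).1
  rw [he]
  refine ⟨hsq.1.add hs, ?_⟩
  rw [integral_add hsq.1 hs, integral_finsetSum _ fun j _ => (hterm j).1, hsq.2]
  simp only [(hterm _).2]
  simp; norm_num

theorem integral_exp_chiSq_add_coord_sq_le {n : ℕ} (k : Fin n) {τ : ℝ} (hτ : |τ| ≤ 1 / 8)
    (hτn : τ ^ 2 * n ≤ 1 / 64) :
    Integrable (fun x : Fin n → ℝ =>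
      Real.exp (τ * ((∑ j, x j ^ 2) - ((n : ℝ) - 1)) + x k ^ 2 / 4)) (gaussVec n 1) ∧
    ∫ x, Real.exp (τ * ((∑ j, x j ^ 2) - ((n : ℝ) - 1)) + x k ^ 2 / 4) ∂(gaussVec n 1) ≤ 3 := by
  have h8 := abs_le.1 hτ
  let a : Fin n → ℝ := fun j => τ + if j = k then 1 / 4 else 0
  have ha : ∀ j, a j < 1 / 2 := fun j => by simp only [a]; split_ifs <;> linarith
  have hn : 1 ≤ n := k.pos
  have h : ∀ x : Fin n → ℝ,
      Real.exp (τ * ((∑ j, x j ^ 2) - ((n : ℝ) - 1)) + x k ^ 2 / 4) =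
      Real.exp (-τ) ^ (n - 1) * Real.exp (∑ j, a j * x j ^ 2) := fun x => by
    rw [← Real.exp_nat_mul, ← Real.exp_add]
    congr 1
    simp only [a, add_mul, Finset.sum_add_distrib, ← Finset.mul_sum, ite_mul, zero_mul,
      Finset.sum_ite_eq', Finset.mem_univ, if_true]
    push_cast [hn]; ring
  simp_rw [h]
  refine ⟨(integrable_exp_sum_mul_sq_gaussVec ha).const_mul _, ?_⟩
  rw [integral_const_mul, integral_exp_sum_mul_sq_gaussVec ha,
    ← Finset.mul_prod_erase _ _ (Finset.mem_univ k)]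
  have h1 : ∏ j ∈ Finset.univ.erase k, (√(1 - 2 * a j))⁻¹ = (√(1 - 2 * τ))⁻¹ ^ (n - 1) := by
    rw [Finset.prod_congr rfl (g := fun _ => (√(1 - 2 * τ))⁻¹), Finset.prod_const,
      Finset.card_erase_of_mem (Finset.mem_univ k), Finset.card_univ, Fintype.card_fin]
    intro j hj
    simp [a, Finset.ne_of_mem_erase hj]
  have h2 : (√(1 - 2 * a k))⁻¹ ≤ 2 := by
    rw [inv_le_comm₀ (Real.sqrt_pos.2 (by have := ha k; linarith)) two_pos]
    refine Real.le_sqrt_of_sq_le ?_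
    simp only [a, if_true]
    linarith
  have h3 : Real.exp (-τ) ^ (n - 1) * (√(1 - 2 * τ))⁻¹ ^ (n - 1) ≤ 3 / 2 := by
    rw [← mul_pow]
    refine (pow_le_pow_left₀ (by positivity) (exp_neg_mul_inv_sqrt_le (by linarith)) _).trans ?_
    rw [← Real.exp_nat_mul]
    have h4 : ((n - 1 : ℕ) : ℝ) * (2 * τ ^ 2) ≤ 1 / 32 := by
      have : ((n - 1 : ℕ) : ℝ) ≤ n := by exact_mod_cast Nat.sub_le n 1
      nlinarith [sq_nonneg τ]
    refine (Real.exp_le_exp.2 h4).trans ?_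
    have := Real.exp_bound_div_one_sub_of_interval (x := 1 / 32) (by norm_num) (by norm_num)
    exact this.trans (by norm_num)
  rw [h1]
  calc _ = (√(1 - 2 * a k))⁻¹ * (Real.exp (-τ) ^ (n - 1) * (√(1 - 2 * τ))⁻¹ ^ (n - 1)) := by ring
    _ ≤ 2 * (3 / 2) := mul_le_mul h2 h3 (by positivity) (by norm_num)
    _ = 3 := by norm_num

theorem sq_le_two_mul_exp_add_exp (y : ℝ) : y ^ 2 ≤ 2 * (Real.exp y + Real.exp (-y)) := by
  have h := Real.quadratic_le_exp_of_nonneg (abs_nonneg y)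
  have h2 : Real.exp |y| ≤ Real.exp y + Real.exp (-y) := by
    rcases abs_choice y with h | h <;> rw [h] <;> linarith [Real.exp_pos y, Real.exp_pos (-y)]
  rw [sq_abs] at h
  linarith [abs_nonneg y]

theorem integral_sq_chiSq_mul_le_coord {n : ℕ} (k : Fin n) :
    Integrable (fun x : Fin n → ℝ => (((∑ j, x j ^ 2) - ((n : ℝ) - 1)) * x k ^ 2) ^ 2 *
      Real.exp (x k ^ 2 / 8)) (gaussVec n 1) ∧
    ∫ x, (((∑ j, x j ^ 2) - ((n : ℝ) - 1)) * x k ^ 2) ^ 2 * Real.exp (x k ^ 2 / 8)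
      ∂(gaussVec n 1) ≤ 100000 * (n : ℝ) := by
  have hn : (1 : ℝ) ≤ n := by exact_mod_cast k.pos
  set θ : ℝ := 1 / (8 * √n) with hθ
  have hs : 1 ≤ √(n : ℝ) := Real.one_le_sqrt.2 hn
  have hss : √(n : ℝ) ^ 2 = n := Real.sq_sqrt (by linarith)
  have hθn : θ ^ 2 * n = 1 / 64 := by
    rw [hθ, div_pow, mul_pow, hss]; field_simp; norm_num
  have hθ0 : 0 ≤ θ := by positivity
  have hθ8 : θ ≤ 1 / 8 := by
    rw [hθ]; exact one_div_le_one_div_of_le (by norm_num) (by linarith)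
  obtain ⟨i1, b1⟩ := integral_exp_chiSq_add_coord_sq_le k (τ := θ)
    (by rwa [abs_of_nonneg hθ0]) hθn.le
  obtain ⟨i2, b2⟩ := integral_exp_chiSq_add_coord_sq_le k (τ := -θ)
    (by rwa [abs_neg, abs_of_nonneg hθ0]) (by rw [neg_sq]; exact hθn.le)
  have hpt : ∀ x : Fin n → ℝ, (((∑ j, x j ^ 2) - ((n : ℝ) - 1)) * x k ^ 2) ^ 2 *
      Real.exp (x k ^ 2 / 8) ≤ (16384 * n) * (
      Real.exp (θ * ((∑ j, x j ^ 2) - ((n : ℝ) - 1)) + x k ^ 2 / 4) +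
      Real.exp (-θ * ((∑ j, x j ^ 2) - ((n : ℝ) - 1)) + x k ^ 2 / 4)) := fun x => by
    set w := (∑ j, x j ^ 2) - ((n : ℝ) - 1)
    set e := Real.exp (x k ^ 2 / 8) with he
    have h4 : Real.exp (x k ^ 2 / 4) = e * e := by rw [he, ← Real.exp_add]; ring_nf
    rw [Real.exp_add, Real.exp_add, h4]
    have hw : w ^ 2 ≤ 128 * n * (Real.exp (θ * w) + Real.exp (-θ * w)) := by
      have := sq_le_two_mul_exp_add_exp (θ * w)
      rw [mul_pow, ← neg_mul] at this
      have h5 : w ^ 2 = 64 * n * (θ ^ 2 * w ^ 2) := by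
        rw [show 64 * (n : ℝ) * (θ ^ 2 * w ^ 2) = 64 * (θ ^ 2 * n) * w ^ 2 by ring, hθn]; ring
      rw [h5]
      nlinarith
    have hq : (x k ^ 2) ^ 2 ≤ 128 * e := by
      have := Real.quadratic_le_exp_of_nonneg (x := x k ^ 2 / 8) (by positivity)
      rw [← he] at this
      nlinarith [sq_nonneg (x k)]
    have he0 : 0 < e := Real.exp_pos _
    calc (w * x k ^ 2) ^ 2 * e = w ^ 2 * (x k ^ 2) ^ 2 * e := by ring
      _ ≤ (128 * n * (Real.exp (θ * w) + Real.exp (-θ * w))) * (128 * e) * e := by gcongr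
      _ = _ := by ring
  have hI := (i1.add i2).const_mul (16384 * n)
  have hG : Integrable (fun x : Fin n → ℝ => (((∑ j, x j ^ 2) - ((n : ℝ) - 1)) * x k ^ 2) ^ 2 *
      Real.exp (x k ^ 2 / 8)) (gaussVec n 1) := by
    refine hI.mono' (by fun_prop) (ae_of_all _ fun x => ?_)
    rw [Real.norm_of_nonneg (by positivity)]
    exact hpt x
  refine ⟨hG, (integral_mono hG hI hpt).trans ?_⟩
  simp only [Pi.add_apply]
  rw [integral_const_mul, integral_add i1 i2]
  nlinarith

theorem integral_sq_chiSq_mul_le {n : ℕ} (hn : 1 ≤ n) {u : Fin n → ℝ} (hu : ∑ j, u j ^ 2 = 1) :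
    Integrable (fun x : Fin n → ℝ => (((∑ j, x j ^ 2) - ((n : ℝ) - 1)) *
      (∑ j, u j * x j) ^ 2) ^ 2 * Real.exp ((∑ j, u j * x j) ^ 2 / 8)) (gaussVec n 1) ∧
    ∫ x, (((∑ j, x j ^ 2) - ((n : ℝ) - 1)) * (∑ j, u j * x j) ^ 2) ^ 2 *
      Real.exp ((∑ j, u j * x j) ^ 2 / 8) ∂(gaussVec n 1) ≤ 100000 * (n : ℝ) := by
  obtain ⟨h1, h2⟩ := integral_sq_chiSq_mul_le_coord (⟨0, hn⟩ : Fin n)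
  obtain ⟨h3, h4⟩ := integrable_and_integral_of_coord hu ⟨0, hn⟩
    (F := fun p s => ((p - ((n : ℝ) - 1)) * s ^ 2) ^ 2 * Real.exp (s ^ 2 / 8)) (by fun_prop) h1
  exact ⟨h3, h4.trans_le h2⟩

theorem integral_chiSq_mul_dotProduct_sq {n : ℕ} (hn : 1 ≤ n) {u : Fin n → ℝ}
    (hu : ∑ j, u j ^ 2 = 1) :
    Integrable (fun x : Fin n → ℝ => ((∑ j, x j ^ 2) - ((n : ℝ) - 1)) *
      (∑ j, u j * x j) ^ 2) (gaussVec n 1) ∧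
    ∫ x, ((∑ j, x j ^ 2) - ((n : ℝ) - 1)) * (∑ j, u j * x j) ^ 2 ∂(gaussVec n 1) = 3 := by
  obtain ⟨h1, h2⟩ := integral_chiSq_mul_coord_sq (⟨0, hn⟩ : Fin n)
  obtain ⟨h3, h4⟩ := integrable_and_integral_of_coord hu ⟨0, hn⟩
    (F := fun p s => (p - ((n : ℝ) - 1)) * s ^ 2) (by fun_prop) h1
  exact ⟨h3, h4.trans h2⟩

theorem exp_le_one_add_add_sq_mul_exp_abs (y : ℝ) :
    Real.exp y ≤ 1 + y + y ^ 2 * Real.exp |y| := by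
  have h1 : 1 ≤ Real.exp |y| := Real.one_le_exp (abs_nonneg y)
  rcases le_or_gt |y| 1 with h | h
  · have := (abs_le.1 (Real.abs_exp_sub_one_sub_id_le h)).2
    nlinarith [sq_nonneg y]
  · rcases le_or_gt 0 y with h0 | h0
    · rw [abs_of_nonneg h0] at h ⊢
      nlinarith [mul_nonneg (by nlinarith : (0 : ℝ) ≤ y ^ 2 - 1) (Real.exp_pos y).le]
    · rw [abs_of_neg h0] at h
      have : Real.exp y ≤ 1 := Real.exp_le_one_iff.2 h0.le
      nlinarith [sq_nonneg y]

/-- Moment generating function of the quadratic form of a Gaussian row, truncated at the event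
that the squared norm of the row is close to its mean. -/
theorem integral_exp_truncated_le {n : ℕ} (hn : 1 ≤ n) {u : Fin n → ℝ} (hu : ∑ j, u j ^ 2 = 1)
    {lam B : ℝ} (hB : |lam| * B ≤ 1 / 8) :
    Integrable (fun x : Fin n → ℝ => if |(∑ j, x j ^ 2) - ((n : ℝ) - 1)| ≤ B then
      Real.exp (lam * (((∑ j, x j ^ 2) - ((n : ℝ) - 1)) * (∑ j, u j * x j) ^ 2 - 3)) else 0)
      (gaussVec n 1) ∧
    ∫ x, (if |(∑ j, x j ^ 2) - ((n : ℝ) - 1)| ≤ B then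
      Real.exp (lam * (((∑ j, x j ^ 2) - ((n : ℝ) - 1)) * (∑ j, u j * x j) ^ 2 - 3)) else 0)
      ∂(gaussVec n 1) ≤ Real.exp (100000 * n * lam ^ 2) := by
  obtain ⟨h1, h2⟩ := integral_chiSq_mul_dotProduct_sq hn hu
  obtain ⟨h3, h4⟩ := integral_sq_chiSq_mul_le hn hu
  set X : (Fin n → ℝ) → ℝ := fun x => ((∑ j, x j ^ 2) - ((n : ℝ) - 1)) * (∑ j, u j * x j) ^ 2
    with hX
  set G : (Fin n → ℝ) → ℝ := fun x => (X x) ^ 2 * Real.exp ((∑ j, u j * x j) ^ 2 / 8) with hG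
  have hpt : ∀ x : Fin n → ℝ, (if |(∑ j, x j ^ 2) - ((n : ℝ) - 1)| ≤ B then
      Real.exp (lam * (X x - 3)) else 0) ≤
      Real.exp (-3 * lam) * (1 + lam * X x + lam ^ 2 * G x) := fun x => by
    have he : 1 ≤ Real.exp ((∑ j, u j * x j) ^ 2 / 8) := Real.one_le_exp (by positivity)
    split_ifs with hx
    · rw [show lam * (X x - 3) = -3 * lam + lam * X x by ring, Real.exp_add]
      refine mul_le_mul_of_nonneg_left ?_ (Real.exp_pos _).le
      refine (exp_le_one_add_add_sq_mul_exp_abs _).trans ?_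
      have : |lam * X x| ≤ (∑ j, u j * x j) ^ 2 / 8 := by
        rw [hX, abs_mul, abs_mul, abs_of_nonneg (sq_nonneg (∑ j, u j * x j))]
        calc _ ≤ |lam| * (B * (∑ j, u j * x j) ^ 2) := by gcongr
          _ = (|lam| * B) * (∑ j, u j * x j) ^ 2 := by ring
          _ ≤ 1 / 8 * (∑ j, u j * x j) ^ 2 := by gcongr
          _ = _ := by ring
      have := Real.exp_le_exp.2 this
      rw [hG]
      nlinarith [sq_nonneg (lam * X x)]
    · refine mul_nonneg (Real.exp_pos _).le ?_
      rw [hG]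
      nlinarith [sq_nonneg (1 + lam * X x),
        mul_nonneg (sq_nonneg (lam * X x)) (sub_nonneg.2 he)]
  have hI : Integrable (fun x => Real.exp (-3 * lam) * (1 + lam * X x + lam ^ 2 * G x))
      (gaussVec n 1) :=
    (((integrable_const _).add (h1.const_mul lam)).add (h3.const_mul (lam ^ 2))).const_mul _
  have hm : Measurable (fun x : Fin n → ℝ => if |(∑ j, x j ^ 2) - ((n : ℝ) - 1)| ≤ B then
      Real.exp (lam * (X x - 3)) else 0) := by
    refine Measurable.ite (measurableSet_le (by fun_prop) measurable_const) ?_ measurable_const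
    simp only [hX]
    fun_prop
  have hf : Integrable (fun x : Fin n → ℝ => if |(∑ j, x j ^ 2) - ((n : ℝ) - 1)| ≤ B then
      Real.exp (lam * (X x - 3)) else 0) (gaussVec n 1) := by
    refine hI.mono' hm.aestronglyMeasurable (ae_of_all _ fun x => ?_)
    rw [Real.norm_of_nonneg (by split_ifs <;> positivity)]
    exact hpt x
  refine ⟨hf, (integral_mono hf hI hpt).trans ?_⟩
  have hadd : Integrable (fun x => 1 + lam * X x) (gaussVec n 1) :=
    (integrable_const _).add (h1.const_mul lam)
  rw [integral_const_mul, integral_add hadd (h3.const_mul _),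
    integral_add (integrable_const _) (h1.const_mul _), integral_const_mul, integral_const_mul, h2]
  simp only [integral_const, probReal_univ, smul_eq_mul, mul_one]
  have h5 : 1 + lam * 3 + lam ^ 2 * ∫ x, G x ∂(gaussVec n 1) ≤
      Real.exp (3 * lam + 100000 * n * lam ^ 2) := by
    refine le_trans ?_ (Real.add_one_le_exp _)
    nlinarith [mul_le_mul_of_nonneg_left h4 (sq_nonneg lam)]
  refine (mul_le_mul_of_nonneg_left h5 (Real.exp_pos _).le).trans_eq ?_
  rw [← Real.exp_add]
  ring_nf

theorem measure_lt_abs_le {α : Type*} [MeasurableSpace α] {μ : Measure α} {f : α → ℝ} {t b : ℝ}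
    (hb : 0 ≤ b) (h : ∀ σ : ℝ, |σ| = 1 → μ {x | t < σ * f x} ≤ ENNReal.ofReal b) :
    μ {x | t < |f x|} ≤ ENNReal.ofReal (2 * b) := by
  refine (measure_mono (t := {x | t < 1 * f x} ∪ {x | t < -1 * f x}) fun x hx => ?_).trans
    ((measure_union_le _ _).trans
      ((add_le_add (h 1 (by simp)) (h (-1) (by simp))).trans_eq ?_))
  · simpa only [Set.mem_ofPred_eq, Set.mem_union, one_mul, neg_one_mul] using lt_abs.1 hx
  · rw [two_mul, ENNReal.ofReal_add hb hb]

theorem inv_four_mul_sqrt_bounds {n : ℕ} (hn : 1 ≤ n) :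
    0 < 1 / (4 * √(n : ℝ)) ∧ 1 / (4 * √(n : ℝ)) ≤ 1 / 4 ∧
      (1 / (4 * √(n : ℝ))) ^ 2 * n = 1 / 16 := by
  have hn' : (1 : ℝ) ≤ n := by exact_mod_cast hn
  have hs : 1 ≤ √(n : ℝ) := Real.one_le_sqrt.2 hn'
  refine ⟨by positivity, one_div_le_one_div_of_le (by norm_num) (by linarith), ?_⟩
  rw [div_pow, mul_pow, Real.sq_sqrt (by linarith)]
  field_simp
  norm_num

/-- Tail bound for the squared norm of a Gaussian row. -/
theorem gaussVec_lt_abs_normSq_sub_le {n : ℕ} (hn : 1 ≤ n) (B : ℝ) :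
    gaussVec n 1 {x | B < |(∑ j, x j ^ 2) - ((n : ℝ) - 1)|} ≤
      ENNReal.ofReal (2 * Real.exp (3 / 8 - B / (4 * √(n : ℝ)))) := by
  obtain ⟨h0, h4, hsq⟩ := inv_four_mul_sqrt_bounds hn
  set θ : ℝ := 1 / (4 * √(n : ℝ)) with hθ
  refine measure_lt_abs_le (Real.exp_pos _).le fun σ hσ => ?_
  have hσθ : |σ * θ| ≤ 1 / 4 := by rw [abs_mul, hσ, one_mul, abs_of_pos h0]; exact h4
  have hσ2 : σ ^ 2 = 1 := by rw [← sq_abs, hσ, one_pow]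
  have hm := mul_meas_ge_le_integral_of_nonneg (μ := gaussVec n 1)
    (f := fun x => Real.exp (σ * θ * ((∑ j, x j ^ 2) - n)))
    (ae_of_all _ fun x => (Real.exp_pos _).le) (integrable_exp_chiSq hσθ)
    (Real.exp (θ * (B - 1)))
  have hle : (gaussVec n 1).real {x | Real.exp (θ * (B - 1)) ≤
      Real.exp (σ * θ * ((∑ j, x j ^ 2) - n))} ≤ Real.exp (3 / 8 - B / (4 * √(n : ℝ))) := by
    rw [← le_div_iff₀' (Real.exp_pos _)] at hm
    refine hm.trans ((div_le_div_of_nonneg_right (integral_exp_chiSq_le hσθ)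
      (Real.exp_pos _).le).trans ?_)
    rw [← Real.exp_sub, Real.exp_le_exp, mul_pow, hσ2]
    have : B / (4 * √(n : ℝ)) = θ * B := by rw [hθ]; ring
    rw [this]
    linarith
  refine (measure_mono fun x hx => ?_).trans
    ((ENNReal.le_ofReal_iff_toReal_le (measure_ne_top _ _) (Real.exp_pos _).le).2 hle)
  simp only [Set.mem_ofPred_eq] at hx ⊢
  rw [Real.exp_le_exp, show σ * θ * ((∑ j, x j ^ 2) - (n : ℝ)) =
    θ * (σ * ((∑ j, x j ^ 2) - ((n : ℝ) - 1)) - σ) by ring]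
  refine mul_le_mul_of_nonneg_left ?_ h0.le
  linarith [le_abs_self σ]

theorem iidGaussVec_exists_lt_abs_normSq_sub_le {N n : ℕ} (hn : 1 ≤ n) (B : ℝ) :
    iidGaussVec N n 1 {Y | ∃ i, B < |(∑ j, Y i j ^ 2) - ((n : ℝ) - 1)|} ≤
      ENNReal.ofReal (N * (2 * Real.exp (3 / 8 - B / (4 * √(n : ℝ))))) := by
  have hset : {Y : Fin N → Fin n → ℝ | ∃ i, B < |(∑ j, Y i j ^ 2) - ((n : ℝ) - 1)|} =
      ⋃ i : Fin N, Function.eval i ⁻¹' {x | B < |(∑ j, x j ^ 2) - ((n : ℝ) - 1)|} := by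
    ext Y; simp
  rw [hset]
  have hi : ∀ i : Fin N, iidGaussVec N n 1
      (Function.eval i ⁻¹' {x | B < |(∑ j, x j ^ 2) - ((n : ℝ) - 1)|}) ≤
      ENNReal.ofReal (2 * Real.exp (3 / 8 - B / (4 * √(n : ℝ)))) := fun i => by
    have hmp : MeasurePreserving (Function.eval i) (iidGaussVec N n 1) (gaussVec n 1) :=
      measurePreserving_eval (fun _ : Fin N => gaussVec n 1) i
    rw [hmp.measure_preimage (measurableSet_lt measurable_const (by fun_prop)).nullMeasurableSet]
    exact gaussVec_lt_abs_normSq_sub_le hn B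
  refine (measure_iUnion_fintype_le _ _).trans ((Finset.sum_le_sum fun i _ => hi i).trans_eq ?_)
  rw [Finset.sum_const, Finset.card_univ, Fintype.card_fin, nsmul_eq_mul,
    ENNReal.ofReal_mul (Nat.cast_nonneg N), ENNReal.ofReal_natCast]

/-- Chernoff bound for the quadratic form of the null matrix in a fixed direction, on the event
that no row is too large. -/
theorem iidGaussVec_abs_sum_sub_ge_le {N n : ℕ} (hN : 1 ≤ N) (hn : 1 ≤ n) {u : Fin n → ℝ}
    (hu : ∑ j, u j ^ 2 = 1) {B t : ℝ} (hB : B ≤ √(N : ℝ) / 8) :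
    iidGaussVec N n 1 {Y | (∀ i, |(∑ j, Y i j ^ 2) - ((n : ℝ) - 1)| ≤ B) ∧
      t * N < |∑ i, (((∑ j, Y i j ^ 2) - ((n : ℝ) - 1)) * (∑ j, u j * Y i j) ^ 2 - 3)|} ≤
      ENNReal.ofReal (2 * Real.exp (100000 * n - √(N : ℝ) * t)) := by
  have hN' : (0 : ℝ) < N := by exact_mod_cast hN
  have hs : 0 < √(N : ℝ) := Real.sqrt_pos.2 hN'
  have hss : √(N : ℝ) * √(N : ℝ) = N := Real.mul_self_sqrt hN'.le
  have key : ∀ σ : ℝ, |σ| = 1 →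
      iidGaussVec N n 1 {Y | (∀ i, |(∑ j, Y i j ^ 2) - ((n : ℝ) - 1)| ≤ B) ∧
      t * N < σ * ∑ i, (((∑ j, Y i j ^ 2) - ((n : ℝ) - 1)) * (∑ j, u j * Y i j) ^ 2 - 3)} ≤
      ENNReal.ofReal (Real.exp (100000 * n - √(N : ℝ) * t)) := by
    intro σ hσ
    have hσ2 : σ ^ 2 = 1 := by rw [← sq_abs, hσ, one_pow]
    have hlam : |σ / √(N : ℝ)| * B ≤ 1 / 8 := by
      rw [abs_div, hσ, abs_of_pos hs, one_div_mul_eq_div, div_le_iff₀ hs]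
      linarith
    obtain ⟨hi, hb⟩ := integral_exp_truncated_le hn hu hlam
    refine (pi_measure_le_exp (fun _ : Fin N => gaussVec n 1) (fun _ x =>
      if |(∑ j, x j ^ 2) - ((n : ℝ) - 1)| ≤ B then Real.exp (σ / √(N : ℝ) *
        (((∑ j, x j ^ 2) - ((n : ℝ) - 1)) * (∑ j, u j * x j) ^ 2 - 3)) else 0)
      (fun _ x => by positivity) (fun _ => hi) (fun _ => hb) (t := √(N : ℝ) * t) ?_).trans_eq ?_
    · rintro Y ⟨hY, ht⟩
      rw [Finset.prod_congr rfl fun i _ => if_pos (hY i), ← Real.exp_sum, Real.exp_le_exp,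
        ← Finset.mul_sum, div_mul_eq_mul_div, le_div_iff₀ hs]
      calc √(N : ℝ) * t * √(N : ℝ) = t * (√(N : ℝ) * √(N : ℝ)) := by ring
        _ = t * N := by rw [hss]
        _ ≤ _ := ht.le
    · rw [Fintype.card_fin, div_pow, hσ2, Real.sq_sqrt hN'.le]
      congr 3
      field_simp
  refine (measure_mono (t := _ ∪ _) ?_).trans ((measure_union_le _ _).trans
    ((add_le_add (key 1 (by simp)) (key (-1) (by simp))).trans_eq ?_))
  · rintro Y ⟨hY, ht⟩
    rcases lt_abs.1 ht with h | h
    · exact Or.inl ⟨hY, by rwa [one_mul]⟩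
    · exact Or.inr ⟨hY, by rwa [neg_one_mul]⟩
  · rw [two_mul, ENNReal.ofReal_add (Real.exp_pos _).le (Real.exp_pos _).le]

theorem iidGaussVec_inv_eq_map (N n : ℕ) :
    iidGaussVec N n ((N : NNReal))⁻¹ =
      (iidGaussVec N n 1).map fun Y i j => Y i j / √(N : ℝ) := by
  have h1 : gaussianReal 0 ((N : NNReal))⁻¹ = (gaussianReal 0 1).map (· / √(N : ℝ)) := by
    rw [gaussianReal_map_div_const]
    congr 1
    · simp
    · ext; simp
  have h2 : gaussVec n ((N : NNReal))⁻¹ = (gaussVec n 1).map fun x j => x j / √(N : ℝ) := by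
    have : IsProbabilityMeasure ((gaussianReal 0 1).map (· / √(N : ℝ))) := h1 ▸ inferInstance
    rw [gaussVec, gaussVec, h1]
    exact (Measure.pi_map_pi (f := fun _ : Fin n => (· / √(N : ℝ))) fun _ => by fun_prop).symm
  have : IsProbabilityMeasure ((gaussVec n 1).map fun x j => x j / √(N : ℝ)) :=
    h2 ▸ inferInstance
  rw [iidGaussVec, iidGaussVec, h2]
  exact (Measure.pi_map_pi (f := fun (_ : Fin N) (x : Fin n → ℝ) j => x j / √(N : ℝ))
    fun _ => Measurable.aemeasurable (by fun_prop)).symm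

theorem dotProduct_specMat_div_sqrt_mulVec {N n : ℕ} (hN : 1 ≤ N) (Y : Fin N → Fin n → ℝ)
    {u : Fin n → ℝ} (hu : ∑ j, u j ^ 2 = 1) :
    u ⬝ᵥ specMat (Matrix.of fun i j => Y i j / √(N : ℝ)) *ᵥ u =
      (∑ i, (((∑ j, Y i j ^ 2) - ((n : ℝ) - 1)) * (∑ j, u j * Y i j) ^ 2 - 3)) / (N : ℝ) ^ 2 := by
  have hN' : (0 : ℝ) < N := by exact_mod_cast hN
  rw [dotProduct_specMat_mulVec, hu, Finset.sum_sub_distrib, sub_div _ _ ((N : ℝ) ^ 2),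
    Finset.sum_div]
  congr 1
  · refine Finset.sum_congr rfl fun i _ => ?_
    simp only [Matrix.of_apply, div_pow, Real.sq_sqrt hN'.le, ← mul_div_assoc, ← Finset.sum_div]
    field_simp
  · simp only [Finset.sum_const, Finset.card_univ, Fintype.card_fin, nsmul_eq_mul]
    field_simp

/-- Upper bound on the tail of the spectral norm under the null distribution. -/
theorem null_specNorm_specMat_gt_le {N n : ℕ} (hN : 1 ≤ N) (hn : 1 ≤ n) {B t : ℝ}
    (hB : B ≤ √(N : ℝ) / 8) :
    iidGaussVec N n ((N : NNReal))⁻¹ {Y | 2 * t / N < specNorm (specMat (Matrix.of Y))} ≤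
      ENNReal.ofReal (N * (2 * Real.exp (3 / 8 - B / (4 * √(n : ℝ)))) +
        5 ^ n * (2 * Real.exp (100000 * n - √(N : ℝ) * t))) := by
  have hN' : (0 : ℝ) < N := by exact_mod_cast hN
  rw [iidGaussVec_inv_eq_map, Measure.map_apply (by fun_prop)
    (measurableSet_lt measurable_const continuous_specNorm_specMat.measurable)]
  obtain ⟨T, hT, hcard, hnet⟩ := exists_finset_specNorm_le n hn
  refine (measure_mono (t := {Y | ∃ i, B < |(∑ j, Y i j ^ 2) - ((n : ℝ) - 1)|} ∪
    ⋃ u ∈ T, {Y | (∀ i, |(∑ j, Y i j ^ 2) - ((n : ℝ) - 1)| ≤ B) ∧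
      t * N < |∑ i, (((∑ j, Y i j ^ 2) - ((n : ℝ) - 1)) * (∑ j, u j * Y i j) ^ 2 - 3)|})
    fun Y hY => ?_).trans ((measure_union_le _ _).trans ?_)
  · by_cases hYB : ∃ i, B < |(∑ j, Y i j ^ 2) - ((n : ℝ) - 1)|
    · exact Or.inl hYB
    · push Not at hYB
      obtain ⟨u, hu, hle⟩ := hnet _ (specMat_transpose (Matrix.of fun i j => Y i j / √(N : ℝ)))
      refine Or.inr (Set.mem_biUnion hu ⟨hYB, ?_⟩)
      rw [dotProduct_specMat_div_sqrt_mulVec hN Y (hT u hu), abs_div,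
        abs_of_nonneg (by positivity : (0 : ℝ) ≤ (N : ℝ) ^ 2)] at hle
      have h := lt_of_lt_of_le hY hle
      rw [mul_div_assoc, mul_lt_mul_iff_right₀ two_pos, div_lt_div_iff₀ hN' (by positivity)] at h
      nlinarith
  · rw [ENNReal.ofReal_add (by positivity) (by positivity)]
    refine add_le_add (iidGaussVec_exists_lt_abs_normSq_sub_le hn B) ?_
    refine (measure_biUnion_finset_le _ _).trans
      ((Finset.sum_le_sum fun u hu => iidGaussVec_abs_sum_sub_ge_le hN hn (hT u hu) hB).trans ?_)
    rw [Finset.sum_const, nsmul_eq_mul, ENNReal.ofReal_mul (p := 5 ^ n) (by positivity)]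
    have h5 : (T.card : ENNReal) ≤ ENNReal.ofReal (5 ^ n) := by
      rw [← ENNReal.ofReal_natCast]
      exact ENNReal.ofReal_le_ofReal (by exact_mod_cast hcard)
    exact mul_le_mul' h5 le_rfl

theorem brMeasure_apply_univ {N : ℕ} {ρ : ℝ} (hρ : 0 ≤ ρ) (hρ1 : ρ ≤ 1) :
    brMeasure N ρ Set.univ = 1 := by
  simp only [brMeasure, Measure.add_apply, Measure.smul_apply, measure_univ, ENNReal.smul_def,
    smul_eq_mul, mul_one]
  norm_cast
  rw [← Real.toNNReal_add (by linarith) (by linarith), ← Real.toNNReal_add (by linarith)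
    (by linarith), ← Real.toNNReal_one]
  congr 1
  ring

theorem isProbabilityMeasure_brMeasure (N : ℕ) {ρ : ℝ} (hρ : 0 ≤ ρ) (hρ1 : ρ ≤ 1) :
    IsProbabilityMeasure (brMeasure N ρ) :=
  ⟨brMeasure_apply_univ hρ hρ1⟩

theorem integrable_and_integral_brMeasure {N : ℕ} {ρ : ℝ} (hN : 1 ≤ N) (hρ : 0 < ρ) (hρ1 : ρ ≤ 1)
    (f : ℝ → ℝ) :
    Integrable (fun x => f (N * ρ * x ^ 2)) (brMeasure N ρ) ∧
      ∫ x, f (N * ρ * x ^ 2) ∂(brMeasure N ρ) = (1 - ρ) * f 0 + ρ * f 1 := by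
  have hN' : (0 : ℝ) < N := by exact_mod_cast hN
  have hd : ∀ (a : NNReal) (x : ℝ),
      Integrable (fun x => f (N * ρ * x ^ 2)) (a • Measure.dirac x) := fun a x =>
    (integrable_dirac (by simp)).smul_measure_nnreal
  have hr : (N : ℝ) * ρ * (√(N * ρ))⁻¹ ^ 2 = 1 := by
    rw [inv_pow, Real.sq_sqrt (by positivity)]
    field_simp
  refine ⟨((hd _ _).add_measure (hd _ _)).add_measure (hd _ _), ?_⟩
  rw [brMeasure, integral_add_measure ((hd _ _).add_measure (hd _ _)) (hd _ _),
    integral_add_measure (hd _ _) (hd _ _)]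
  simp only [integral_smul_nnreal_measure, integral_dirac, NNReal.smul_def, smul_eq_mul, neg_sq, hr,
    Real.coe_toNNReal _ (by linarith : 0 ≤ 1 - ρ), Real.coe_toNNReal _ (by linarith : 0 ≤ ρ / 2)]
  norm_num
  ring

theorem ae_brMeasure {N : ℕ} {ρ : ℝ} (hN : 1 ≤ N) (hρ : 0 < ρ) :
    ∀ᵐ x ∂(brMeasure N ρ), (N : ℝ) * ρ * x ^ 2 ≤ 1 := by
  have hN' : (0 : ℝ) < N := by exact_mod_cast hN
  have hr : (N : ℝ) * ρ * (√(N * ρ))⁻¹ ^ 2 = 1 := by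
    rw [inv_pow, Real.sq_sqrt (by positivity)]
    field_simp
  have hm : MeasurableSet {x : ℝ | (N : ℝ) * ρ * x ^ 2 ≤ 1} :=
    measurableSet_le (by fun_prop) measurable_const
  simp only [brMeasure, ae_add_measure_iff]
  refine ⟨⟨Measure.ae_smul_measure ?_ _, Measure.ae_smul_measure ?_ _⟩,
    Measure.ae_smul_measure ?_ _⟩ <;> rw [ae_dirac_iff hm]
  · simp
  · exact hr.le
  · rw [neg_sq]; exact hr.le

/-- Chernoff bound for the fourth moment of a Bernoulli–Rademacher vector. -/
theorem brVec_abs_sum_sub_gt_le {N : ℕ} {ρ c : ℝ} (hN : 1 ≤ N) (hρ : 0 < ρ) (hρ1 : ρ ≤ 1)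
    (hc : 0 < c) (hc1 : c ≤ 1) :
    brVec N ρ {v | c * (N * ρ) < |∑ i, ((N * ρ * v i ^ 2) ^ 2 - ρ)|} ≤
      ENNReal.ofReal (2 * Real.exp (-(N * ρ * c ^ 2 / 4))) := by
  have := isProbabilityMeasure_brMeasure N hρ.le hρ1
  have hN' : (0 : ℝ) < N := by exact_mod_cast hN
  refine measure_lt_abs_le (Real.exp_pos _).le fun σ hσ => ?_
  have hσ2 : σ ^ 2 = 1 := by rw [← sq_abs, hσ, one_pow]
  obtain ⟨hi, hb⟩ := integrable_and_integral_brMeasure hN hρ hρ1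
    fun y => Real.exp (σ * (c / 2) * (y ^ 2 - ρ))
  refine (pi_measure_le_exp (fun _ : Fin N => brMeasure N ρ)
    (fun _ x => Real.exp (σ * (c / 2) * ((N * ρ * x ^ 2) ^ 2 - ρ)))
    (fun _ x => (Real.exp_pos _).le) (fun _ => hi) (c := ρ * (c / 2) ^ 2)
    (t := c / 2 * (c * (N * ρ))) (fun _ => ?_) ?_).trans_eq ?_
  · rw [hb]
    have h1 : |σ * (c / 2)| ≤ 1 := by rw [abs_mul, hσ, abs_of_pos (by positivity)]; linarith
    have h2 := (abs_le.1 (Real.abs_exp_sub_one_sub_id_le h1)).2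
    have h3 : (1 - ρ) * Real.exp (σ * (c / 2) * (0 ^ 2 - ρ)) +
        ρ * Real.exp (σ * (c / 2) * (1 ^ 2 - ρ)) = Real.exp (-(σ * (c / 2) * ρ)) *
        (1 + ρ * (Real.exp (σ * (c / 2)) - 1)) := by
      rw [show σ * (c / 2) * (1 ^ 2 - ρ) = -(σ * (c / 2) * ρ) + σ * (c / 2) by ring,
        Real.exp_add]
      ring_nf
    have h4 : 1 + ρ * (Real.exp (σ * (c / 2)) - 1) ≤
        Real.exp (σ * (c / 2) * ρ + ρ * (c / 2) ^ 2) := by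
      refine le_trans ?_ (Real.add_one_le_exp _)
      rw [mul_pow, hσ2] at h2
      nlinarith
    rw [h3]
    refine (mul_le_mul_of_nonneg_left h4 (Real.exp_pos _).le).trans_eq ?_
    rw [← Real.exp_add]
    ring_nf
  · intro v hv
    rw [← Real.exp_sum, Real.exp_le_exp, ← Finset.mul_sum, mul_comm σ, mul_assoc]
    exact mul_le_mul_of_nonneg_left (le_of_lt hv) (by positivity)
  · rw [Fintype.card_fin]
    ring_nf

/-- Chernoff bound for a weighted sum of centered chi-squared variables. -/
theorem iidGaussVec_abs_sum_mul_chiSq_gt_le {N n : ℕ} (hn : 1 ≤ n) {a : Fin N → ℝ}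
    (ha0 : ∀ i, 0 ≤ a i) (ha1 : ∀ i, a i ≤ 1) {c : ℝ} (hc : 0 < c) (hc1 : c ≤ 1) :
    iidGaussVec N (n - 1) 1 {Y | c * N < |∑ i, a i * ((∑ j, Y i j ^ 2) - ((n : ℝ) - 1))|} ≤
      ENNReal.ofReal (2 * Real.exp (-(c ^ 2 * N / (8 * n)))) := by
  have hn' : (1 : ℝ) ≤ n := by exact_mod_cast hn
  have hcast : ((n - 1 : ℕ) : ℝ) = (n : ℝ) - 1 := by push_cast [hn]; ring
  set θ : ℝ := c / (4 * n) with hθ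
  have hθ0 : 0 < θ := by positivity
  have hθ4 : θ ≤ 1 / 4 := by
    rw [hθ, div_le_div_iff₀ (by positivity) (by norm_num)]
    nlinarith
  refine measure_lt_abs_le (Real.exp_pos _).le fun σ hσ => ?_
  have hσ2 : σ ^ 2 = 1 := by rw [← sq_abs, hσ, one_pow]
  have hσa : ∀ i, |σ * θ * a i| ≤ 1 / 4 := fun i => by
    rw [abs_mul, abs_mul, hσ, abs_of_pos hθ0, abs_of_nonneg (ha0 i), one_mul]
    exact (mul_le_of_le_one_right hθ0.le (ha1 i)).trans hθ4
  refine (pi_measure_le_exp (fun _ : Fin N => gaussVec (n - 1) 1)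
    (fun i x => Real.exp (σ * θ * a i * ((∑ j, x j ^ 2) - (n - 1 : ℕ))))
    (fun _ x => (Real.exp_pos _).le) (fun i => integrable_exp_chiSq (hσa i))
    (c := 2 * θ ^ 2 * n) (t := θ * (c * N))
    (fun i => (integral_exp_chiSq_le (hσa i)).trans ?_) ?_).trans ?_
  · rw [Real.exp_le_exp, hcast, mul_pow, mul_pow, hσ2, one_mul]
    have h1 : a i ^ 2 ≤ 1 := pow_le_one₀ (ha0 i) (ha1 i)
    have h2 : θ ^ 2 * a i ^ 2 ≤ θ ^ 2 := mul_le_of_le_one_right (sq_nonneg _) h1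
    gcongr
    linarith
  · intro Y hY
    rw [← Real.exp_sum, Real.exp_le_exp, hcast]
    have : ∑ i, σ * θ * a i * ((∑ j, Y i j ^ 2) - ((n : ℝ) - 1)) =
        θ * (σ * ∑ i, a i * ((∑ j, Y i j ^ 2) - ((n : ℝ) - 1))) := by
      rw [Finset.mul_sum, Finset.mul_sum]
      exact Finset.sum_congr rfl fun i _ => by ring
    rw [this]
    exact mul_le_mul_of_nonneg_left (le_of_lt hY) hθ0.le
  · refine ENNReal.ofReal_le_ofReal (Real.exp_le_exp.2 (le_of_eq ?_))
    rw [Fintype.card_fin, hθ]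
    field_simp
    ring

theorem rowCat_zero {n : ℕ} (hn : 0 < n) (a : ℝ) (b : Fin (n - 1) → ℝ) :
    rowCat a b (⟨0, hn⟩ : Fin n) = a := by
  simp [rowCat]

theorem sum_sq_rowCat {n : ℕ} (hn : 0 < n) (a : ℝ) (b : Fin (n - 1) → ℝ) :
    ∑ j : Fin n, rowCat a b j ^ 2 = a ^ 2 + ∑ j, b j ^ 2 := by
  obtain ⟨m, rfl⟩ : ∃ m, n = m + 1 := ⟨n - 1, by omega⟩
  rw [Fin.sum_univ_succ]
  simp [rowCat]

/-- Deterministic lower bound on the spectral norm of the planted matrix. -/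
theorem le_specNorm_specMat_gaussBasis {N n : ℕ} (hN : 1 ≤ N) (hn : 0 < n) {ρ c : ℝ} (hρ : 0 < ρ)
    (hc : 0 < c) (hρc : c ≤ |ρ - 1 / 3|) {v : Fin N → ℝ} {B : Fin N → Fin (n - 1) → ℝ}
    {Q : Matrix (Fin n) (Fin n) ℝ} (hQ : Qᵀ * Q = 1)
    (h1 : |∑ i, ((N * ρ * v i ^ 2) ^ 2 - ρ)| ≤ c * (N * ρ))
    (h2 : |∑ i, N * ρ * v i ^ 2 * ((∑ j, B i j ^ 2) - ((n : ℝ) - 1) / N)| ≤ c) :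
    c / (4 * N * ρ) ≤ specNorm (specMat (gaussBasis v B * Q)) := by
  have hN' : (0 : ℝ) < N := by exact_mod_cast hN
  have hNρ : 0 < (N : ℝ) * ρ := by positivity
  refine le_trans ?_ (abs_quadForm_le_specNorm_mul (gaussBasis v B) hQ ⟨0, hn⟩)
  simp only [gaussBasis, Matrix.of_apply, sum_sq_rowCat hn, rowCat_zero hn]
  set R := ∑ i, N * ρ * v i ^ 2 * ((∑ j, B i j ^ 2) - ((n : ℝ) - 1) / N) with hR
  set P := ∑ i, ((N * ρ * v i ^ 2) ^ 2 - ρ) with hP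
  have h3 : (∑ i, ((v i ^ 2 + ∑ j, B i j ^ 2) - ((n : ℝ) - 1) / N) * v i ^ 2) - 3 / (N : ℝ) =
      (P / (N * ρ) + R + (1 - 3 * ρ)) / (N * ρ) := by
    have h4 : ∑ i, ((v i ^ 2 + ∑ j, B i j ^ 2) - ((n : ℝ) - 1) / N) * v i ^ 2 =
        (∑ i, (N * ρ * v i ^ 2) ^ 2) / (N * ρ) ^ 2 + R / (N * ρ) := by
      rw [hR, Finset.sum_div, Finset.sum_div, ← Finset.sum_add_distrib]
      refine Finset.sum_congr rfl fun i _ => ?_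
      field_simp
      ring
    have h5 : ∑ i, (N * ρ * v i ^ 2) ^ 2 = P + N * ρ := by
      rw [hP, Finset.sum_sub_distrib]
      simp
    rw [h4, h5]
    field_simp
    ring
  rw [h3, abs_div, abs_of_pos hNρ, show 4 * (N : ℝ) * ρ = 4 * (N * ρ) by ring, ← div_div]
  refine div_le_div_of_nonneg_right ?_ hNρ.le
  have h6 : |P / (N * ρ)| ≤ c := by
    rw [abs_div, abs_of_pos hNρ]
    exact (div_le_iff₀ hNρ).2 h1
  have h7 := abs_le.1 h6
  have h8 := abs_le.1 h2
  rcases le_abs.1 hρc with h | h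
  · exact le_abs.2 (Or.inr (by linarith))
  · exact le_abs.2 (Or.inl (by linarith))

theorem measurable_gaussBasis_mul {N n : ℕ} :
    Measurable fun w : (Fin N → ℝ) × (Fin n → Fin n → ℝ) × (Fin N → Fin (n - 1) → ℝ) =>
      fun i j => (gaussBasis w.1 w.2.2 * Matrix.of w.2.1) i j := by
  refine measurable_pi_iff.2 fun i => measurable_pi_iff.2 fun j => ?_
  simp only [Matrix.mul_apply, gaussBasis, Matrix.of_apply, rowCat]
  refine Finset.measurable_sum _ fun k _ => Measurable.mul ?_ (by fun_prop)
  split_ifs <;> fun_prop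

theorem iidGaussVec_inv_noise_gt_le {N n : ℕ} (hN : 1 ≤ N) (hn : 1 ≤ n) {a : Fin N → ℝ}
    (ha0 : ∀ i, 0 ≤ a i) (ha1 : ∀ i, a i ≤ 1) {c : ℝ} (hc : 0 < c) (hc1 : c ≤ 1) :
    iidGaussVec N (n - 1) ((N : NNReal))⁻¹
      {Y | c < |∑ i, a i * ((∑ j, Y i j ^ 2) - ((n : ℝ) - 1) / N)|} ≤
      ENNReal.ofReal (2 * Real.exp (-(c ^ 2 * N / (8 * n)))) := by
  have hN' : (0 : ℝ) < N := by exact_mod_cast hN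
  rw [iidGaussVec_inv_eq_map, Measure.map_apply (by fun_prop)
    (measurableSet_lt measurable_const (by fun_prop))]
  refine (measure_mono fun Y hY => ?_).trans (iidGaussVec_abs_sum_mul_chiSq_gt_le hn ha0 ha1 hc hc1)
  have h : ∑ i, a i * ((∑ j, (Y i j / √(N : ℝ)) ^ 2) - ((n : ℝ) - 1) / N) =
      (∑ i, a i * ((∑ j, Y i j ^ 2) - ((n : ℝ) - 1))) / N := by
    rw [Finset.sum_div]
    refine Finset.sum_congr rfl fun i _ => ?_
    simp only [div_pow, Real.sq_sqrt hN'.le]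
    rw [← Finset.sum_div, ← sub_div, mul_div_assoc]
  rw [Set.mem_preimage, Set.mem_ofPred_eq, h, abs_div, abs_of_pos hN', lt_div_iff₀ hN'] at hY
  exact hY

/-- Lower tail of the spectral norm under the planted distribution. -/
theorem planted_specNorm_specMat_lt_le {N n : ℕ} (hN : 1 ≤ N) (hn : 1 ≤ n) {ρ c : ℝ} (hρ : 0 < ρ)
    (hρ1 : ρ ≤ 1) (hc : 0 < c) (hc1 : c ≤ 1) (hρc : c ≤ |ρ - 1 / 3|)
    (μQ : Measure (Fin n → Fin n → ℝ)) [IsProbabilityMeasure μQ]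
    (hQ : ∀ᵐ Q ∂μQ, (Matrix.of Q)ᵀ * Matrix.of Q = 1) :
    Measure.map
      (fun w : (Fin N → ℝ) × (Fin n → Fin n → ℝ) × (Fin N → Fin (n - 1) → ℝ) =>
        fun i j => (gaussBasis w.1 w.2.2 * Matrix.of w.2.1) i j)
      ((brVec N ρ).prod (μQ.prod (iidGaussVec N (n - 1) ((N : NNReal))⁻¹)))
      {Y : Fin N → Fin n → ℝ | specNorm (specMat (Matrix.of Y)) < c / (4 * N * ρ)} ≤
    ENNReal.ofReal (2 * Real.exp (-(N * ρ * c ^ 2 / 4)) +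
      2 * Real.exp (-(c ^ 2 * N / (8 * n)))) := by
  have := isProbabilityMeasure_brMeasure N hρ.le hρ1
  have : IsProbabilityMeasure (brVec N ρ) := by unfold brVec; infer_instance
  have : IsProbabilityMeasure (iidGaussVec N (n - 1) ((N : NNReal))⁻¹) := by
    unfold iidGaussVec; infer_instance
  set ν := iidGaussVec N (n - 1) ((N : NNReal))⁻¹
  rw [Measure.map_apply measurable_gaussBasis_mul
    (measurableSet_lt continuous_specNorm_specMat.measurable measurable_const)]
  let A : Set (Fin N → ℝ) := {v | c * (N * ρ) < |∑ i, ((N * ρ * v i ^ 2) ^ 2 - ρ)|}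
  let D : Set ((Fin N → ℝ) × (Fin n → Fin n → ℝ) × (Fin N → Fin (n - 1) → ℝ)) :=
    {w | c < |∑ i, N * ρ * w.1 i ^ 2 * ((∑ j, w.2.2 i j ^ 2) - ((n : ℝ) - 1) / N)|}
  have hA : MeasurableSet A := measurableSet_lt measurable_const (by fun_prop)
  have hD : MeasurableSet D := measurableSet_lt measurable_const (by fun_prop)
  have hQ' : ∀ᵐ w ∂((brVec N ρ).prod (μQ.prod ν)), (Matrix.of w.2.1)ᵀ * Matrix.of w.2.1 = 1 :=
    (Measure.quasiMeasurePreserving_fst.comp Measure.quasiMeasurePreserving_snd).ae hQ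
  have hsub : ∀ᵐ w ∂((brVec N ρ).prod (μQ.prod ν)),
      w ∈ (fun w : (Fin N → ℝ) × (Fin n → Fin n → ℝ) × (Fin N → Fin (n - 1) → ℝ) =>
        fun i j => (gaussBasis w.1 w.2.2 * Matrix.of w.2.1) i j) ⁻¹'
        {Y : Fin N → Fin n → ℝ | specNorm (specMat (Matrix.of Y)) < c / (4 * N * ρ)} →
      w ∈ Prod.fst ⁻¹' A ∪ D := by
    filter_upwards [hQ'] with w hw hlt
    by_contra hcon
    rw [Set.mem_union, not_or] at hcon
    exact (le_specNorm_specMat_gaussBasis hN hn hρ hc hρc hw (not_lt.1 hcon.1)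
      (not_lt.1 hcon.2)).not_gt hlt
  refine (measure_mono_ae hsub).trans ((measure_union_le _ _).trans ?_)
  rw [ENNReal.ofReal_add (by positivity) (by positivity)]
  refine add_le_add ?_ ?_
  · rw [measurePreserving_fst.measure_preimage hA.nullMeasurableSet]
    exact brVec_abs_sum_sub_gt_le hN hρ hρ1 hc hc1
  · rw [Measure.prod_apply hD]
    have hv : ∀ᵐ v ∂(brVec N ρ), ∀ i, N * ρ * v i ^ 2 ≤ 1 := ae_all_iff.2 fun i =>
      (measurePreserving_eval (fun _ : Fin N => brMeasure N ρ) i).quasiMeasurePreserving.ae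
        (ae_brMeasure hN hρ)
    refine (lintegral_mono_ae (g := fun _ =>
      ENNReal.ofReal (2 * Real.exp (-(c ^ 2 * N / (8 * n))))) ?_).trans_eq (by simp)
    filter_upwards [hv] with v hv
    have hslice : Prod.mk v ⁻¹' D = Prod.snd ⁻¹' {Y : Fin N → Fin (n - 1) → ℝ |
        c < |∑ i, N * ρ * v i ^ 2 * ((∑ j, Y i j ^ 2) - ((n : ℝ) - 1) / N)|} := rfl
    rw [hslice, measurePreserving_snd.measure_preimage
      (measurableSet_lt measurable_const (by fun_prop)).nullMeasurableSet]
    exact iidGaussVec_inv_noise_gt_le hN hn (fun i => by positivity) hv hc hc1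

/-- Arithmetic of the parameters in the null tail bound. -/
theorem null_tail_le {N n : ℕ} {ρ c L : ℝ} (hn : 1 ≤ n) (hN : 1 ≤ N) (hρ : 0 < ρ) (hρ1 : ρ ≤ 1)
    (hc : 0 < c) (hc1 : c ≤ 1) (hL : 4096 / c ^ 2 ≤ L) (hL7 : L ^ 7 ≤ N)
    (h : (n : ℝ) * ρ / √(N : ℝ) * L ≤ c / (32 * 100002)) :
    (N : ℝ) * (2 * Real.exp (3 / 8 - 16 * L * √(n : ℝ) / (4 * √(n : ℝ)))) +
      5 ^ n * (2 * Real.exp (100000 * n - √(N : ℝ) * (c / (16 * ρ)))) ≤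
    4 * N * Real.exp (-L) ^ 4 + 2 * Real.exp (-L) ^ 2 := by
  have hn' : (1 : ℝ) ≤ n := by exact_mod_cast hn
  have hN' : (1 : ℝ) ≤ N := by exact_mod_cast hN
  have hs : 0 < √(N : ℝ) := Real.sqrt_pos.2 (by linarith)
  have hL1 : 1 ≤ L := by
    refine le_trans ?_ hL
    rw [le_div_iff₀ (by positivity)]
    nlinarith
  have hcL : 4096 ≤ c ^ 2 * L := by rwa [div_le_iff₀' (by positivity)] at hL
  refine add_le_add ?_ ?_
  · have h1 : 16 * L * √(n : ℝ) / (4 * √(n : ℝ)) = 4 * L := by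
      have : 0 < √(n : ℝ) := Real.sqrt_pos.2 (by linarith)
      field_simp
      norm_num
    have h2 : Real.exp (3 / 8 - 4 * L) = Real.exp (3 / 8) * Real.exp (-L) ^ 4 := by
      rw [← Real.exp_nat_mul, ← Real.exp_add]
      push_cast
      ring_nf
    have h3 : Real.exp (3 / 8) ≤ 2 :=
      (Real.exp_bound_div_one_sub_of_interval (by norm_num) (by norm_num)).trans (by norm_num)
    rw [h1, h2]
    calc (N : ℝ) * (2 * (Real.exp (3 / 8) * Real.exp (-L) ^ 4))
        ≤ N * (2 * (2 * Real.exp (-L) ^ 4)) := by gcongr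
      _ = _ := by ring
  · have h5 : (5 : ℝ) ^ n ≤ Real.exp (2 * n) := by
      rw [mul_comm, Real.exp_nat_mul]
      exact pow_le_pow_left₀ (by norm_num)
        ((by norm_num : (5 : ℝ) ≤ 1 + 2 + 2 ^ 2 / 2).trans
          (Real.quadratic_le_exp_of_nonneg (by norm_num))) n
    have h6 : 100002 * n ≤ √(N : ℝ) * (c / (32 * ρ)) := by
      rw [div_mul_eq_mul_div, div_le_iff₀ hs] at h
      rw [← mul_div_assoc, le_div_iff₀ (by positivity)]
      have : (n : ℝ) * ρ ≤ n * ρ * L := le_mul_of_one_le_right (by positivity) hL1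
      linarith
    have h7 : 2 * L ≤ √(N : ℝ) * (c / (32 * ρ)) := by
      have h8 : 64 * L / c ≤ √(N : ℝ) := by
        refine Real.le_sqrt_of_sq_le (le_trans ?_ hL7)
        rw [div_pow, div_le_iff₀ (by positivity)]
        have h9 : L ≤ L ^ 5 := le_self_pow₀ hL1 (by norm_num)
        have h10 : 4096 ≤ c ^ 2 * L ^ 5 := hcL.trans (by gcongr)
        nlinarith [mul_le_mul_of_nonneg_right h10 (sq_nonneg L)]
      have h11 : c / 32 ≤ c / (32 * ρ) :=
        div_le_div_of_nonneg_left hc.le (by positivity) (by linarith)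
      calc 2 * L = 64 * L / c * (c / 32) := by field_simp; norm_num
        _ ≤ _ := by gcongr
    have h12 : c / (16 * ρ) = c / (32 * ρ) + c / (32 * ρ) := by field_simp; norm_num
    calc (5 : ℝ) ^ n * (2 * Real.exp (100000 * n - √(N : ℝ) * (c / (16 * ρ))))
        ≤ Real.exp (2 * n) * (2 * Real.exp (100000 * n - √(N : ℝ) * (c / (16 * ρ)))) := by gcongr
      _ = 2 * Real.exp (100002 * n - √(N : ℝ) * (c / (16 * ρ))) := by
        rw [mul_left_comm, ← Real.exp_add]
        ring_nf
      _ ≤ 2 * Real.exp ((2 : ℕ) * (-L)) := by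
        rw [h12]
        gcongr
        push_cast
        linarith
      _ = _ := by rw [Real.exp_nat_mul]

/-- Arithmetic of the parameters in the planted tail bound. -/
theorem planted_tail_le {N n : ℕ} {ρ δ c L : ℝ} (hn : 1 ≤ n) (hN : 1 ≤ N) (hc : 0 < c)
    (hδ : 0 < δ) (hL : 1 ≤ L) (hρδ : 16 / c ^ 2 * Real.log (1 / δ) / N ≤ ρ)
    (h : √((n : ℝ) / N) * L ≤ c / (32 * 100002)) :
    2 * Real.exp (-(N * ρ * c ^ 2 / 4)) + 2 * Real.exp (-(c ^ 2 * N / (8 * n))) ≤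
      2 * δ ^ 4 + 2 * Real.exp (-L) ^ 4 := by
  have hn' : (1 : ℝ) ≤ n := by exact_mod_cast hn
  have hN' : (1 : ℝ) ≤ N := by exact_mod_cast hN
  refine add_le_add ?_ ?_
  · have h1 : 4 * Real.log (1 / δ) ≤ N * ρ * c ^ 2 / 4 := by
      rw [div_le_iff₀ (by linarith), div_mul_eq_mul_div, div_le_iff₀ (by positivity)] at hρδ
      linarith
    have h2 : Real.exp (-(4 * Real.log (1 / δ))) = δ ^ 4 := by
      rw [one_div, Real.log_inv, ← Real.exp_log (pow_pos hδ 4), Real.log_pow]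
      push_cast
      ring_nf
    rw [← h2]
    gcongr
  · have h3 : (n : ℝ) / N * L ^ 2 ≤ (c / (32 * 100002)) ^ 2 := by
      rw [← Real.sq_sqrt (by positivity : (0 : ℝ) ≤ (n : ℝ) / N), ← mul_pow]
      exact pow_le_pow_left₀ (by positivity) h 2
    have h4 : 4 * L ≤ c ^ 2 * N / (8 * n) := by
      rw [div_mul_eq_mul_div, div_le_iff₀ (by linarith)] at h3
      rw [le_div_iff₀ (by linarith)]
      have h5 : (n : ℝ) * L ≤ n * L ^ 2 := by
        gcongr
        nlinarith
      have : 0 ≤ c ^ 2 * N := by positivity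
      nlinarith
    have h6 : Real.exp (-L) ^ 4 = Real.exp (-(4 * L)) := by
      rw [← Real.exp_nat_mul]
      push_cast
      ring_nf
    rw [h6]
    gcongr

/-- detection via the spectral norm of `M̃`: for the detection problem with
null `𝒬` (i.i.d. `N(0,1/N)` entries) and planted `𝒫` (`Ỹ = YQ`, `v ∼ BR(N,ρ)`, `Q`
Haar-uniform orthogonal — a probability measure supported on orthogonal matrices and
left-translation invariant), for every constant `c₁ ∈ (0, 0.1)` there exist `C₂, c₃ > 0`
depending only on `c₁` and an absolute `N₀` such that for every `δ ∈ (0, 1/2)`: if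
`ρ ≥ C₂ log(1/δ)/N`, `|ρ - 1/3| ≥ c₁`, `N ≥ log⁷(N/δ)` and
`(nρ/√N + √(n/N)) log(N/δ) ≤ c₃`, then
`ℙ_𝒫{‖M̃‖ < c₁/(4Nρ)} + ℙ_𝒬{‖M̃‖ > c₁/(8Nρ)} ≤ δ`. -/
theorem stmt_12 (c₁ : ℝ) (hc₁ : 0 < c₁) (hc₁' : c₁ < 0.1) :
    ∃ C₂ : ℝ, 0 < C₂ ∧ ∃ c₃ : ℝ, 0 < c₃ ∧ ∃ N₀ : ℕ,
      ∀ N n : ℕ, ∀ ρ δ : ℝ, N₀ ≤ N → 1 ≤ n → n ≤ N → 0 < ρ → ρ ≤ 1 →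
        0 < δ → δ < 1 / 2 →
        C₂ * Real.log (1 / δ) / N ≤ ρ →
        c₁ ≤ |ρ - 1 / 3| →
        (Real.log (N / δ)) ^ 7 ≤ N →
        ((n : ℝ) * ρ / Real.sqrt N + Real.sqrt ((n : ℝ) / N)) * Real.log (N / δ) ≤ c₃ →
        ∀ (μQ : Measure (Fin n → Fin n → ℝ)) [IsProbabilityMeasure μQ],
          (∀ᵐ Q ∂μQ, (Matrix.of Q)ᵀ * Matrix.of Q = 1) →
          (∀ R : Matrix (Fin n) (Fin n) ℝ, Rᵀ * R = 1 →
            Measure.map (fun Q => fun i j => (R * Matrix.of Q) i j) μQ = μQ) →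
          (Measure.map
              (fun w : (Fin N → ℝ) × (Fin n → Fin n → ℝ) × (Fin N → Fin (n - 1) → ℝ) =>
                fun i j => (gaussBasis w.1 w.2.2 * Matrix.of w.2.1) i j)
              ((brVec N ρ).prod (μQ.prod (iidGaussVec N (n - 1) ((N : NNReal))⁻¹))))
              {Y : Fin N → Fin n → ℝ | specNorm (specMat (Matrix.of Y)) < c₁ / (4 * N * ρ)}
            + (Measure.pi fun _ : Fin N =>
                (Measure.pi fun _ : Fin n => gaussianReal 0 ((N : NNReal))⁻¹))
              {Y : Fin N → Fin n → ℝ | specNorm (specMat (Matrix.of Y)) > c₁ / (8 * N * ρ)}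
            ≤ ENNReal.ofReal δ := by
  refine ⟨16 / c₁ ^ 2, by positivity, c₁ / (32 * 100002), by positivity,
    max 4 ⌈Real.exp (4096 / c₁ ^ 2)⌉₊, fun N n ρ δ hN hn _ hρ hρ1 hδ hδ2 hρδ hρc hL7 hsmall μQ _
    hQ _ => ?_⟩
  have hN4 : 4 ≤ N := (le_max_left _ _).trans hN
  have hN1 : 1 ≤ N := by omega
  have hN' : (4 : ℝ) ≤ N := by exact_mod_cast hN4
  have hc1 : c₁ ≤ 1 := by linarith
  set L := Real.log (N / δ) with hLdef
  have hLc : 4096 / c₁ ^ 2 ≤ L := by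
    rw [hLdef, Real.le_log_iff_exp_le (by positivity)]
    calc Real.exp (4096 / c₁ ^ 2) ≤ (⌈Real.exp (4096 / c₁ ^ 2)⌉₊ : ℝ) := Nat.le_ceil _
      _ ≤ N := by exact_mod_cast (le_max_right _ _).trans hN
      _ ≤ N / δ := le_div_self (by linarith) hδ (by linarith)
  have hL1 : 1 ≤ L := by
    refine le_trans ?_ hLc
    rw [le_div_iff₀ (by positivity)]
    nlinarith
  have hexp : Real.exp (-L) = δ / N := by
    rw [hLdef, Real.exp_neg, Real.exp_log (by positivity), inv_div]
  rw [add_mul] at hsmall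
  have hs1 : (n : ℝ) * ρ / √(N : ℝ) * L ≤ c₁ / (32 * 100002) :=
    le_trans (le_add_of_nonneg_right (by positivity)) hsmall
  have hs2 : √((n : ℝ) / N) * L ≤ c₁ / (32 * 100002) :=
    le_trans (le_add_of_nonneg_left (by positivity)) hsmall
  have hB : 16 * L * √(n : ℝ) ≤ √(N : ℝ) / 8 := by
    have hs : 0 < √(N : ℝ) := Real.sqrt_pos.2 (by linarith)
    rw [Real.sqrt_div (Nat.cast_nonneg n), div_mul_eq_mul_div, div_le_iff₀ hs] at hs2
    nlinarith
  have hplanted := planted_specNorm_specMat_lt_le hN1 hn hρ hρ1 hc₁ hc1 hρc μQ hQ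
  have hnull := null_specNorm_specMat_gt_le hN1 hn (t := c₁ / (16 * ρ)) hB
  rw [show 2 * (c₁ / (16 * ρ)) / N = c₁ / (8 * N * ρ) by field_simp; norm_num] at hnull
  refine (add_le_add hplanted hnull).trans ?_
  rw [← ENNReal.ofReal_add (by positivity) (by positivity)]
  refine ENNReal.ofReal_le_ofReal ((add_le_add (planted_tail_le hn hN1 hc₁ hδ hL1 hρδ hs2)
    (null_tail_le hn hN1 hρ hρ1 hc₁ hc1 hLc hL7 hs1)).trans ?_)
  rw [hexp]
  have hx : δ / N ≤ δ / 4 := div_le_div_of_nonneg_left hδ.le (by norm_num) hN'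
  have hx0 : 0 < δ / N := by positivity
  have hNx : (N : ℝ) * (δ / N) = δ := by field_simp
  have hx2 : (δ / N) ^ 2 ≤ (δ / 4) ^ 2 := by gcongr
  have hx3 : (δ / N) ^ 3 ≤ (δ / 4) ^ 3 := by gcongr
  have hx4 : (δ / N) ^ 4 ≤ (δ / 4) ^ 4 := by gcongr
  have e : 4 * (N : ℝ) * (δ / N) ^ 4 = 4 * δ * (δ / N) ^ 3 := by
    calc 4 * (N : ℝ) * (δ / N) ^ 4 = 4 * (N * (δ / N)) * (δ / N) ^ 3 := by ring
      _ = _ := by rw [hNx]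
  have d2 : δ ^ 2 ≤ δ / 2 := by nlinarith
  have d4 : δ ^ 4 ≤ δ / 8 := by
    have : δ ^ 3 ≤ (1 / 2) ^ 3 := by gcongr
    nlinarith
  have hx3' : 4 * δ * (δ / N) ^ 3 ≤ 4 * δ * (δ / 4) ^ 3 := by gcongr
  rw [e]
  nlinarith
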